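/- arXiv:1110.5627 — 4 statements merged into one kernel-verified Lean document; each statement's English description precedes it below -/
import Mathlib

section
/- Let g be a finite-dimensional real Lie algebra with a norm, and let γ, δ : [0,1] → g be continuous paths. Define the continuous path ε : [0,1] → g by ε(t) = γ(t) + A_γ(t)(δ(t)). Then A_ε(t) = A_γ(t) ∘ A_δ(t) for all t ∈ [0,1]. -/
/-- `IsLieBracket B` says that the bilinear map `B = ⁅·,·⁆` makes the
(finite-dimensional, normed) real vector space `g` into a real Lie algebra:
it is alternating and satisfies the Jacobi identity (in Leibniz form). -/
def IsLieBracket {g : Type*} [NormedAddCommGroup g] [NormedSpace ℝ g]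
    (B : g →ₗ[ℝ] g →ₗ[ℝ] g) : Prop :=
  (∀ x : g, B x x = 0) ∧
  (∀ x y z : g, B x (B y z) = B (B x y) z + B y (B x z))

/-- The adjoint endomorphism `ad x = ⁅x, ·⁆` as a continuous linear map. -/
noncomputable def adL {g : Type*} [NormedAddCommGroup g] [NormedSpace ℝ g]
    [FiniteDimensional ℝ g] (B : g →ₗ[ℝ] g →ₗ[ℝ] g) (x : g) : g →L[ℝ] g :=
  LinearMap.toContinuousLinearMap (B x)

/-- `IsTransport B γ A` says that `A : [0,1] → End(g)` is a continuously
differentiable path of linear endomorphisms of `g` with `A 0 = id` and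
`A' t = ad (γ t) ∘ A t` for `t ∈ [0,1]` (one-sided derivatives at the
endpoints, and the derivative is continuous on `[0,1]`). -/
def IsTransport {g : Type*} [NormedAddCommGroup g] [NormedSpace ℝ g]
    [FiniteDimensional ℝ g] (B : g →ₗ[ℝ] g →ₗ[ℝ] g)
    (γ : ℝ → g) (A : ℝ → (g →L[ℝ] g)) : Prop :=
  A 0 = 1 ∧
  (∀ t ∈ Set.Icc (0:ℝ) 1,
    HasDerivWithinAt A ((adL B (γ t)).comp (A t)) (Set.Icc (0:ℝ) 1) t) ∧
  ContinuousOn (fun t => (adL B (γ t)).comp (A t)) (Set.Icc (0:ℝ) 1)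

/-- The path `A_γ : [0,1] → End(g)`, i.e. the unique continuously differentiable
solution of `A 0 = id`, `A' t = ad (γ t) ∘ A t` (chosen via choice; for a
continuous path `γ` it exists and is unique on `[0,1]`). -/
noncomputable def transport {g : Type*} [NormedAddCommGroup g] [NormedSpace ℝ g]
    [FiniteDimensional ℝ g] (B : g →ₗ[ℝ] g →ₗ[ℝ] g) (γ : ℝ → g) :
    ℝ → (g →L[ℝ] g) :=
  letI := Classical.propDecidable (∃ A : ℝ → (g →L[ℝ] g), IsTransport B γ A)
  if h : ∃ A : ℝ → (g →L[ℝ] g), IsTransport B γ A then h.choose else fun _ => 1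

theorem aux_deriv_right {E : Type*} [NormedAddCommGroup E] [NormedSpace ℝ E] {f : ℝ → E} {f' : E}
    {t : ℝ} (ht : t ∈ Set.Ico (0:ℝ) 1)
    (h : HasDerivWithinAt f f' (Set.Icc (0:ℝ) 1) t) : HasDerivWithinAt f f' (Set.Ici t) t := by
  have h1 : HasDerivWithinAt f f' (Set.Icc t 1) t := h.mono (Set.Icc_subset_Icc_left ht.1)
  exact h1.mono_of_mem_nhdsWithin (Icc_mem_nhdsGE ht.2)

theorem aux_bound {E : Type*} [NormedAddCommGroup E] [NormedSpace ℝ E]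
    {L : ℝ → E →L[ℝ] E} (hL : ContinuousOn L (Set.Icc 0 1)) :
    ∃ K : ℝ, 0 ≤ K ∧ ∀ t ∈ Set.Icc (0:ℝ) 1, ‖L t‖ ≤ K := by
  obtain ⟨K, hK⟩ := isCompact_Icc.exists_bound_of_continuousOn hL
  exact ⟨K, (norm_nonneg _).trans (hK 0 (by simp)), hK⟩

/-- Uniqueness for linear ODE. -/
theorem aux_unique {E : Type*} [NormedAddCommGroup E] [NormedSpace ℝ E]
    {L : ℝ → E →L[ℝ] E} (hL : ContinuousOn L (Set.Icc 0 1)) {u v : ℝ → E}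
    (hu : ∀ t ∈ Set.Icc (0:ℝ) 1, HasDerivWithinAt u (L t (u t)) (Set.Icc (0:ℝ) 1) t)
    (hv : ∀ t ∈ Set.Icc (0:ℝ) 1, HasDerivWithinAt v (L t (v t)) (Set.Icc (0:ℝ) 1) t)
    (h0 : u 0 = v 0) : ∀ t ∈ Set.Icc (0:ℝ) 1, u t = v t := by
  obtain ⟨K, hK0, hK⟩ := aux_bound hL
  have hd : ∀ t ∈ Set.Icc (0:ℝ) 1,
      HasDerivWithinAt (fun s => u s - v s) (L t (u t - v t)) (Set.Icc (0:ℝ) 1) t := by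
    intro t ht
    rw [map_sub]
    exact (hu t ht).sub (hv t ht)
  have := eq_zero_of_abs_deriv_le_mul_abs_self_of_eq_zero_right (K := K)
    (f := fun s => u s - v s) (f' := fun t => L t (u t - v t)) (a := 0) (b := 1)
    (fun t ht => (hd t ht).continuousWithinAt)
    (fun t ht => aux_deriv_right ht (hd t ⟨ht.1, ht.2.le⟩)) (by simp [h0])
    (fun t ht => (L t).le_of_opNorm_le (hK t ⟨ht.1, ht.2.le⟩) _)
  intro t ht
  exact sub_eq_zero.1 (this t ht)

/-- Radial truncation. -/
noncomputable def auxTrunc {E : Type*} [NormedAddCommGroup E] [NormedSpace ℝ E] (R : ℝ) (x : E) :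
    E := (R / max R ‖x‖) • x

theorem auxTrunc_norm_le {E : Type*} [NormedAddCommGroup E] [NormedSpace ℝ E] {R : ℝ} (hR : 0 < R)
    (x : E) : ‖auxTrunc R x‖ ≤ R ∧ ‖auxTrunc R x‖ ≤ ‖x‖ := by
  have hm : 0 < max R ‖x‖ := lt_max_of_lt_left hR
  have : ‖auxTrunc R x‖ = R / max R ‖x‖ * ‖x‖ := by
    rw [auxTrunc, norm_smul, Real.norm_of_nonneg (by positivity)]
  rw [this]
  constructor
  · rw [div_mul_eq_mul_div, div_le_iff₀ hm]
    exact mul_le_mul_of_nonneg_left (le_max_right _ _) hR.le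
  · exact mul_le_of_le_one_left (norm_nonneg _) ((div_le_one hm).2 (le_max_left _ _))

theorem auxTrunc_eq {E : Type*} [NormedAddCommGroup E] [NormedSpace ℝ E] {R : ℝ} (hR : 0 < R)
    {x : E} (hx : ‖x‖ ≤ R) : auxTrunc R x = x := by
  rw [auxTrunc, max_eq_left hx, div_self hR.ne', one_smul]

theorem auxTrunc_lip {E : Type*} [NormedAddCommGroup E] [NormedSpace ℝ E] {R : ℝ} (hR : 0 < R)
    (x y : E) : ‖auxTrunc R x - auxTrunc R y‖ ≤ 2 * ‖x - y‖ := by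
  have hx : 0 < max R ‖x‖ := lt_max_of_lt_left hR
  have hy : 0 < max R ‖y‖ := lt_max_of_lt_left hR
  have e : auxTrunc R x - auxTrunc R y
      = (R / max R ‖x‖) • (x - y) + (R / max R ‖x‖ - R / max R ‖y‖) • y := by
    simp only [auxTrunc]; module
  have h1 : R / max R ‖x‖ ≤ 1 := (div_le_one hx).2 (le_max_left _ _)
  have h2 : |max R ‖y‖ - max R ‖x‖| ≤ ‖x - y‖ := by
    rw [max_comm R, max_comm R]
    refine (abs_max_sub_max_le_abs _ _ _).trans ?_
    rw [norm_sub_rev]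
    exact abs_norm_sub_norm_le _ _
  have h3 : ‖y‖ / max R ‖y‖ ≤ 1 := (div_le_one hy).2 (le_max_right _ _)
  have h4 : |R / max R ‖x‖ - R / max R ‖y‖| * ‖y‖
      = (R / max R ‖x‖) * (‖y‖ / max R ‖y‖) * |max R ‖y‖ - max R ‖x‖| := by
    have : R / max R ‖x‖ - R / max R ‖y‖
        = (R / (max R ‖x‖ * max R ‖y‖)) * (max R ‖y‖ - max R ‖x‖) := by
      field_simp
    rw [this, abs_mul, abs_of_nonneg (by positivity : 0 ≤ R / (max R ‖x‖ * max R ‖y‖))]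
    field_simp
  rw [e]
  refine (norm_add_le _ _).trans ?_
  rw [norm_smul, norm_smul, Real.norm_of_nonneg (by positivity), Real.norm_eq_abs, h4, two_mul]
  refine add_le_add (mul_le_of_le_one_left (norm_nonneg _) h1) ?_
  refine (mul_le_of_le_one_left (abs_nonneg _) ?_).trans h2
  exact mul_le_one₀ h1 (by positivity) h3

/-- Global existence for linear ODE. -/
theorem aux_exists {E : Type*} [NormedAddCommGroup E] [NormedSpace ℝ E] [CompleteSpace E]
    {L : ℝ → E →L[ℝ] E} (hL : ContinuousOn L (Set.Icc 0 1)) (x₀ : E) :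
    ∃ u : ℝ → E, u 0 = x₀ ∧
      ∀ t ∈ Set.Icc (0:ℝ) 1, HasDerivWithinAt u (L t (u t)) (Set.Icc (0:ℝ) 1) t := by
  obtain ⟨K, hK0, hK⟩ := aux_bound hL
  set R : ℝ := (‖x₀‖ + 1) * Real.exp K with hRdef
  have hR : 0 < R := by positivity
  have hP : IsPicardLindelof (fun t x => L t (auxTrunc R x)) (tmin := 0) (tmax := 1)
      ⟨0, by simp⟩ x₀ (K * R).toNNReal 0 (K * R).toNNReal (K * 2).toNNReal := by
    refine ⟨?_, ?_, ?_, ?_⟩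
    · intro t ht
      refine LipschitzOnWith.of_dist_le_mul fun x _ y _ => ?_
      rw [dist_eq_norm, dist_eq_norm, ← map_sub, Real.coe_toNNReal _ (by positivity), mul_assoc]
      exact ((L t).le_of_opNorm_le (hK t ht) _).trans
        (mul_le_mul_of_nonneg_left (auxTrunc_lip hR x y) hK0)
    · intro x _
      exact hL.clm_apply continuousOn_const
    · intro t ht x _
      rw [Real.coe_toNNReal _ (by positivity)]
      exact ((L t).le_of_opNorm_le (hK t ht) _).trans
        (mul_le_mul_of_nonneg_left (auxTrunc_norm_le hR x).1 hK0)
    · simp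
  obtain ⟨u, hu0, hu⟩ := hP.exists_eq_forall_mem_Icc_hasDerivWithinAt₀
  have hu0' : u 0 = x₀ := hu0
  have hb := norm_le_gronwallBound_of_norm_deriv_right_le (δ := ‖x₀‖) (K := K) (ε := 0)
    (f := u) (f' := fun t => L t (auxTrunc R (u t))) (a := 0) (b := 1)
    (fun t ht => (hu t ht).continuousWithinAt)
    (fun t ht => aux_deriv_right ht (hu t ⟨ht.1, ht.2.le⟩)) (by rw [hu0'])
    (fun t ht => by
      rw [add_zero]
      exact ((L t).le_of_opNorm_le (hK t ⟨ht.1, ht.2.le⟩) _).trans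
        (mul_le_mul_of_nonneg_left (auxTrunc_norm_le hR _).2 hK0))
  refine ⟨u, hu0', fun t ht => ?_⟩
  have h := hu t ht
  have hle : ‖u t‖ ≤ R := by
    refine (hb t ht).trans ?_
    rw [gronwallBound_ε0, hRdef]
    have : K * (t - 0) ≤ K := mul_le_of_le_one_right hK0 (by linarith [ht.2])
    gcongr
    linarith
  simpa only [auxTrunc_eq hR hle] using h

/-- The adjoint map as a continuous linear map. -/
noncomputable def auxAD {g : Type*} [NormedAddCommGroup g] [NormedSpace ℝ g]
    [FiniteDimensional ℝ g] (B : g →ₗ[ℝ] g →ₗ[ℝ] g) : g →L[ℝ] g →L[ℝ] g :=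
  LinearMap.toContinuousLinearMap
    ((LinearMap.toContinuousLinearMap (𝕜 := ℝ) (E := g) (F' := g)).toLinearMap ∘ₗ B)

theorem auxAD_eq {g : Type*} [NormedAddCommGroup g] [NormedSpace ℝ g]
    [FiniteDimensional ℝ g] (B : g →ₗ[ℝ] g →ₗ[ℝ] g) (x : g) : adL B x = auxAD B x := rfl

theorem aux_ad_cont {g : Type*} [NormedAddCommGroup g] [NormedSpace ℝ g]
    [FiniteDimensional ℝ g] (B : g →ₗ[ℝ] g →ₗ[ℝ] g) {γ : ℝ → g}
    (hγ : ContinuousOn γ (Set.Icc 0 1)) :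
    ContinuousOn (fun t => adL B (γ t)) (Set.Icc 0 1) :=
  (auxAD B).continuous.comp_continuousOn hγ

theorem aux_comp_cont {g : Type*} [NormedAddCommGroup g] [NormedSpace ℝ g]
    [FiniteDimensional ℝ g] (B : g →ₗ[ℝ] g →ₗ[ℝ] g) {γ : ℝ → g}
    (hγ : ContinuousOn γ (Set.Icc 0 1)) :
    ContinuousOn (fun t => ContinuousLinearMap.compL ℝ g g g (adL B (γ t))) (Set.Icc 0 1) :=
  (ContinuousLinearMap.compL ℝ g g g).continuous.comp_continuousOn (aux_ad_cont B hγ)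

theorem aux_isTransport {g : Type*} [NormedAddCommGroup g] [NormedSpace ℝ g]
    [FiniteDimensional ℝ g] (B : g →ₗ[ℝ] g →ₗ[ℝ] g) {γ : ℝ → g}
    (hγ : ContinuousOn γ (Set.Icc 0 1)) : IsTransport B γ (transport B γ) := by
  have hex : ∃ A : ℝ → (g →L[ℝ] g), IsTransport B γ A := by
    haveI : CompleteSpace g := FiniteDimensional.complete ℝ g
    obtain ⟨A, h0, hA⟩ := aux_exists (aux_comp_cont B hγ) 1
    exact ⟨A, h0, hA, (aux_ad_cont B hγ).clm_comp fun t ht => (hA t ht).continuousWithinAt⟩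
  unfold transport
  rw [dif_pos hex]
  exact hex.choose_spec

theorem aux_hom {g : Type*} [NormedAddCommGroup g] [NormedSpace ℝ g]
    [FiniteDimensional ℝ g] (B : g →ₗ[ℝ] g →ₗ[ℝ] g) (hB : IsLieBracket B) {γ : ℝ → g}
    (hγ : ContinuousOn γ (Set.Icc 0 1)) {A : ℝ → (g →L[ℝ] g)} (hA : IsTransport B γ A)
    (x y : g) : ∀ t ∈ Set.Icc (0:ℝ) 1, A t (B x y) = B (A t x) (A t y) := by
  obtain ⟨h0, hd, -⟩ := hA
  have happ : ∀ z : g, ∀ t ∈ Set.Icc (0:ℝ) 1,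
      HasDerivWithinAt (fun s => A s z) (adL B (γ t) (A t z)) (Set.Icc (0:ℝ) 1) t := by
    intro z t ht
    simpa using (hd t ht).clm_apply (hasDerivWithinAt_const t _ z)
  refine aux_unique (aux_ad_cont B hγ) (happ _) (v := fun t => B (A t x) (A t y)) ?_
    (by simp [h0])
  intro t ht
  have h1 := (auxAD B).hasFDerivAt.comp_hasDerivWithinAt t (happ x t ht)
  have h2 := h1.clm_apply (happ y t ht)
  refine h2.congr_deriv ?_
  exact (hB.2 (γ t) (A t x) (A t y)).symm

/-- Cocycle property: if `ε = γ · δ` is the product path,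
`ε t = γ t + A_γ(t) (δ t)`, then `A_ε(t) = A_γ(t) ∘ A_δ(t)` for all `t ∈ [0,1]`. -/
theorem transport_mul {g : Type*}
    [NormedAddCommGroup g] [NormedSpace ℝ g] [FiniteDimensional ℝ g]
    (B : g →ₗ[ℝ] g →ₗ[ℝ] g) (hB : IsLieBracket B)
    (γ δ : ℝ → g) (hγ : ContinuousOn γ (Set.Icc 0 1))
    (hδ : ContinuousOn δ (Set.Icc 0 1)) :
    ∀ t ∈ Set.Icc (0:ℝ) 1,
      transport B (fun s => γ s + transport B γ s (δ s)) t
        = (transport B γ t).comp (transport B δ t) := by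
  have hG := aux_isTransport B hγ
  have hD := aux_isTransport B hδ
  have hGc : ContinuousOn (transport B γ) (Set.Icc 0 1) :=
    fun t ht => (hG.2.1 t ht).continuousWithinAt
  have hε : ContinuousOn (fun s => γ s + transport B γ s (δ s)) (Set.Icc 0 1) :=
    hγ.add (hGc.clm_apply hδ)
  have hE := aux_isTransport B hε
  refine aux_unique (aux_comp_cont B hε) hE.2.1
    (v := fun t => (transport B γ t).comp (transport B δ t)) ?_ ?_
  · intro t ht
    refine ((hG.2.1 t ht).clm_comp (hD.2.1 t ht)).congr_deriv ?_
    ext z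
    have := aux_hom B hB hγ hG (δ t) (transport B δ t z) t ht
    simp [adL, this]
  · rw [hE.1, hG.1, hD.1]
    rfl
end

section
/- Let g be a finite-dimensional real Lie algebra with a norm, and let P(g) = C([0,1], g) be the space of continuous paths [0,1] → g. The multiplication law (γ·δ)(t) = γ(t) + A_γ(t)(δ(t)) turns P(g) into a group: the multiplication is associative, the constant path 0 is a two-sided identity, and for each γ ∈ P(g) the path ι(γ)(t) = −A_γ(t)⁻¹(γ(t)) is a two-sided inverse of γ. -/
/-- Extension of a continuous path `[0,1] → g` to all of `ℝ` (constant outside `[0,1]`). -/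
noncomputable def pathExt {g : Type*} [TopologicalSpace g]
    (γ : C(Set.Icc (0:ℝ) 1, g)) : ℝ → g :=
  Set.IccExtend zero_le_one ⇑γ

/-- The Duistermaat–Kolk multiplication of paths: `(γ · δ)(t) = γ t + A_γ(t) (δ t)`,
as a `g`-valued function on `[0,1]`. -/
noncomputable def pathMul {g : Type*} [NormedAddCommGroup g] [NormedSpace ℝ g]
    [FiniteDimensional ℝ g] (B : g →ₗ[ℝ] g →ₗ[ℝ] g)
    (γ δ : C(Set.Icc (0:ℝ) 1, g)) : Set.Icc (0:ℝ) 1 → g :=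
  fun t => γ t + transport B (pathExt γ) t (δ t)

/-- The Duistermaat–Kolk inversion of paths: `ι(γ)(t) = -A_γ(t)⁻¹ (γ t)`,
as a `g`-valued function on `[0,1]`. -/
noncomputable def pathInv {g : Type*} [NormedAddCommGroup g] [NormedSpace ℝ g]
    [FiniteDimensional ℝ g] (B : g →ₗ[ℝ] g →ₗ[ℝ] g)
    (γ : C(Set.Icc (0:ℝ) 1, g)) : Set.Icc (0:ℝ) 1 → g :=
  fun t => -(Ring.inverse (transport B (pathExt γ) t) (γ t))

open Set in
/-- A linear homogeneous ODE with zero initial value has only the zero solution. -/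
theorem lin_ode_zero {E : Type*} [NormedAddCommGroup E] [NormedSpace ℝ E]
    (c : ℝ → (E →L[ℝ] E)) (hc : Continuous c) (f : ℝ → E) (h0 : f 0 = 0)
    (hf : ∀ t ∈ Icc (0:ℝ) 1, HasDerivWithinAt f (c t (f t)) (Icc (0:ℝ) 1) t) :
    ∀ t ∈ Icc (0:ℝ) 1, f t = 0 := by
  obtain ⟨K, hK⟩ := (isCompact_Icc (a := (0:ℝ)) (b := 1)).exists_bound_of_continuousOn
    hc.continuousOn
  refine eq_zero_of_abs_deriv_le_mul_abs_self_of_eq_zero_right (K := K)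
    (f' := fun t => c t (f t)) (fun t ht => (hf t ht).continuousWithinAt) ?_ h0 ?_
  · intro x hx
    exact (hf x ⟨hx.1, hx.2.le⟩).mono_of_mem_nhdsWithin (Icc_mem_nhdsGE_of_mem hx)
  · intro x hx
    exact (c x).le_of_opNorm_le (hK x ⟨hx.1, hx.2.le⟩) _

open Set in
/-- Global existence for linear homogeneous ODEs on `[0,1]`. -/
theorem lin_ode_exists {E : Type*} [NormedAddCommGroup E] [NormedSpace ℝ E]
    [FiniteDimensional ℝ E]
    (c : ℝ → (E →L[ℝ] E)) (hc : Continuous c) (x₀ : E) :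
    ∃ f : ℝ → E, f 0 = x₀ ∧
      ∀ t ∈ Icc (0:ℝ) 1, HasDerivWithinAt f (c t (f t)) (Icc (0:ℝ) 1) t := by
  haveI : CompleteSpace E := FiniteDimensional.complete ℝ E
  obtain ⟨K, hK⟩ := (isCompact_Icc (a := (0:ℝ)) (b := 1)).exists_bound_of_continuousOn
    hc.continuousOn
  have hK0 : 0 ≤ K := (norm_nonneg _).trans (hK 0 ⟨le_rfl, zero_le_one⟩)
  set R : ℝ := ‖x₀‖ * Real.exp K + 1 with hR
  have hRpos : 0 < R := by positivity
  let φ : ContDiffBump (0:E) := ⟨R, R + 1, hRpos, by linarith⟩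
  let ψ : E → E := fun x => φ x • x
  have hψc : HasCompactSupport ψ := φ.hasCompactSupport.smul_right
  have hψs : ContDiff ℝ 1 ψ := φ.contDiff.smul contDiff_id
  obtain ⟨C, hC⟩ := hψs.lipschitzWith_of_hasCompactSupport hψc one_ne_zero
  obtain ⟨M, hM⟩ := hψc.exists_bound_of_continuous hψs.continuous
  have hM0 : 0 ≤ M := (norm_nonneg _).trans (hM 0)
  have hψle : ∀ x, ‖ψ x‖ ≤ ‖x‖ := fun x => by
    simp only [ψ, norm_smul, Real.norm_eq_abs, abs_of_nonneg φ.nonneg]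
    exact mul_le_of_le_one_left (norm_nonneg _) φ.le_one
  have hPL : IsPicardLindelof (fun t x => c t (ψ x)) (tmin := 0) (tmax := 1)
      ⟨0, le_rfl, zero_le_one⟩ x₀ (K.toNNReal * M.toNNReal) 0 (K.toNNReal * M.toNNReal)
      (K.toNNReal * C) := by
    refine ⟨fun t ht => ?_, fun x _ => ?_, fun t ht x _ => ?_, by simp⟩
    · have h1 : LipschitzWith K.toNNReal (c t) :=
        (c t).lipschitz.weaken (by
          rw [← NNReal.coe_le_coe, Real.coe_toNNReal _ hK0]; exact hK t ht)
      exact (h1.comp hC).lipschitzOnWith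
    · exact (hc.clm_apply continuous_const).continuousOn
    · rw [NNReal.coe_mul, Real.coe_toNNReal _ hK0, Real.coe_toNNReal _ hM0]
      exact (c t).le_of_opNorm_le_of_le (hK t ht) (hM x)
  obtain ⟨f, hf0, hf⟩ := hPL.exists_eq_forall_mem_Icc_hasDerivWithinAt₀
  refine ⟨f, hf0, fun t ht => ?_⟩
  have hb := norm_le_gronwallBound_of_norm_deriv_right_le (f := f)
    (f' := fun t => c t (ψ (f t))) (δ := ‖x₀‖) (K := K) (ε := 0) (a := 0) (b := 1)
    (fun t ht => (hf t ht).continuousWithinAt)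
    (fun x hx => (hf x ⟨hx.1, hx.2.le⟩).mono_of_mem_nhdsWithin (Icc_mem_nhdsGE_of_mem hx))
    (by simpa using (congrArg norm hf0).le)
    (fun x hx => by
      rw [add_zero]
      exact (c x).le_of_opNorm_le_of_le (hK x ⟨hx.1, hx.2.le⟩) (hψle _)) t ht
  rw [gronwallBound_ε0, sub_zero] at hb
  have hle : ‖f t‖ ≤ R := by
    have : Real.exp (K * t) ≤ Real.exp K :=
      Real.exp_le_exp.2 (mul_le_of_le_one_right hK0 ht.2)
    nlinarith [norm_nonneg x₀]
  have h1 : φ (f t) = 1 := φ.one_of_mem_closedBall (by simpa [φ] using hle)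
  have := hf t ht
  simpa [ψ, h1] using this

section
variable {g : Type*} [NormedAddCommGroup g] [NormedSpace ℝ g] [FiniteDimensional ℝ g]

/-- The adjoint representation as a continuous linear map. -/
noncomputable def adC (B : g →ₗ[ℝ] g →ₗ[ℝ] g) : g →L[ℝ] g →L[ℝ] g :=
  LinearMap.toContinuousLinearMap
    ((LinearMap.toContinuousLinearMap : (g →ₗ[ℝ] g) ≃ₗ[ℝ] (g →L[ℝ] g)).toLinearMap ∘ₗ B)

theorem adC_apply (B : g →ₗ[ℝ] g →ₗ[ℝ] g) (x : g) : adC B x = adL B x := rfl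

theorem adL_apply (B : g →ₗ[ℝ] g →ₗ[ℝ] g) (x y : g) : adL B x y = B x y := rfl

theorem continuous_adL (B : g →ₗ[ℝ] g →ₗ[ℝ] g) {γ : ℝ → g} (hγ : Continuous γ) :
    Continuous fun t => adL B (γ t) := (adC B).continuous.comp hγ

theorem continuous_pathExt (γ : C(Set.Icc (0:ℝ) 1, g)) : Continuous (pathExt γ) :=
  γ.continuous.Icc_extend'

theorem pathExt_coe (γ : C(Set.Icc (0:ℝ) 1, g)) (t : Set.Icc (0:ℝ) 1) :
    pathExt γ t = γ t := Set.IccExtend_val _ _ _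

/-- Continuity of the derivative is automatic. -/
theorem isTransport_of (B : g →ₗ[ℝ] g →ₗ[ℝ] g) {γ : ℝ → g} (hγ : Continuous γ)
    {A : ℝ → (g →L[ℝ] g)} (h0 : A 0 = 1)
    (h : ∀ t ∈ Set.Icc (0:ℝ) 1,
      HasDerivWithinAt A ((adL B (γ t)).comp (A t)) (Set.Icc (0:ℝ) 1) t) :
    IsTransport B γ A :=
  ⟨h0, h, (continuous_adL B hγ).continuousOn.clm_comp
    fun t ht => (h t ht).continuousWithinAt⟩

/-- Left composition as an operator. -/
noncomputable def lmulC : (g →L[ℝ] g) →L[ℝ] (g →L[ℝ] g) →L[ℝ] (g →L[ℝ] g) :=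
  ContinuousLinearMap.compL ℝ g g g

theorem transport_spec (B : g →ₗ[ℝ] g →ₗ[ℝ] g) {γ : ℝ → g} (hγ : Continuous γ) :
    IsTransport B γ (transport B γ) := by
  have hex : ∃ A, IsTransport B γ A := by
    obtain ⟨A, h0, h⟩ := lin_ode_exists (fun t => lmulC (adL B (γ t)))
      (lmulC.continuous.comp (continuous_adL B hγ)) (1 : g →L[ℝ] g)
    exact ⟨A, isTransport_of B hγ h0 h⟩
  unfold transport
  rw [dif_pos hex]
  exact hex.choose_spec

theorem transport_unique (B : g →ₗ[ℝ] g →ₗ[ℝ] g) {γ : ℝ → g} (hγ : Continuous γ)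
    {A : ℝ → (g →L[ℝ] g)} (h0 : A 0 = 1)
    (h : ∀ t ∈ Set.Icc (0:ℝ) 1,
      HasDerivWithinAt A ((adL B (γ t)).comp (A t)) (Set.Icc (0:ℝ) 1) t) :
    ∀ t ∈ Set.Icc (0:ℝ) 1, transport B γ t = A t := by
  obtain ⟨h0', h', -⟩ := transport_spec B hγ
  intro t ht
  refine sub_eq_zero.1 (lin_ode_zero (fun t => lmulC (adL B (γ t)))
      (lmulC.continuous.comp (continuous_adL B hγ)) (fun t => transport B γ t - A t)
      (by simp [h0, h0']) (fun s hs => ?_) t ht)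
  rw [map_sub]
  exact (h' s hs).sub (h s hs)

theorem transport_aut (B : g →ₗ[ℝ] g →ₗ[ℝ] g) (hB : IsLieBracket B) {γ : ℝ → g}
    (hγ : Continuous γ) (t : ℝ) (ht : t ∈ Set.Icc (0:ℝ) 1) (x y : g) :
    transport B γ t (B x y) = B (transport B γ t x) (transport B γ t y) := by
  obtain ⟨h0, h, -⟩ := transport_spec B hγ
  refine sub_eq_zero.1 (lin_ode_zero (fun t => adL B (γ t)) (continuous_adL B hγ)
    (fun t => transport B γ t (B x y) - B (transport B γ t x) (transport B γ t y))
    (by simp [h0]) (fun s hs => ?_) t ht)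
  have hx : ∀ z : g, HasDerivWithinAt (fun t => transport B γ t z)
      (B (γ s) (transport B γ s z)) (Set.Icc (0:ℝ) 1) s := fun z => by
    simpa [adL_apply] using (h s hs).clm_apply (hasDerivWithinAt_const s _ z)
  have h2 := (((adC B).hasFDerivAt.comp_hasDerivWithinAt s (hx x)).clm_apply (hx y))
  refine ((hx (B x y)).sub h2).congr_deriv ?_
  simp only [adC_apply, adL_apply, Function.comp, map_sub]
  rw [hB.2 (γ s)]

/-- Existence of the inverse of the transport, with its differential equation. -/
theorem transport_inv (B : g →ₗ[ℝ] g →ₗ[ℝ] g) {γ : ℝ → g} (hγ : Continuous γ) :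
    ∃ C : ℝ → (g →L[ℝ] g), C 0 = 1 ∧
      (∀ t ∈ Set.Icc (0:ℝ) 1,
        HasDerivWithinAt C (-((C t).comp (adL B (γ t)))) (Set.Icc (0:ℝ) 1) t) ∧
      ∀ t ∈ Set.Icc (0:ℝ) 1, C t * transport B γ t = 1 ∧ transport B γ t * C t = 1 := by
  obtain ⟨h0, h, -⟩ := transport_spec B hγ
  obtain ⟨C, hC0, hC⟩ := lin_ode_exists
    (fun t => -((ContinuousLinearMap.compL ℝ g g g).flip (adL B (γ t))))
    (((ContinuousLinearMap.compL ℝ g g g).flip.continuous.comp (continuous_adL B hγ)).neg)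
    (1 : g →L[ℝ] g)
  have hC' : ∀ t ∈ Set.Icc (0:ℝ) 1,
        HasDerivWithinAt C (-((C t).comp (adL B (γ t)))) (Set.Icc (0:ℝ) 1) t := hC
  refine ⟨C, hC0, hC', fun t ht => ?_⟩
  have key : C t * transport B γ t = 1 := by
    refine sub_eq_zero.1 (lin_ode_zero (fun _ => (0 : (g →L[ℝ] g) →L[ℝ] (g →L[ℝ] g)))
      continuous_const (fun t => C t * transport B γ t - 1)
      (by simp [hC0, h0]) (fun s hs => ?_) t ht)
    refine (((hC' s hs).clm_comp (h s hs)).sub_const 1).congr_deriv ?_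
    ext v
    simp
  refine ⟨key, ?_⟩
  have k2 : (C t : g →ₗ[ℝ] g) * (transport B γ t : g →ₗ[ℝ] g) = 1 := by
    ext v
    exact DFunLike.congr_fun key v
  have k3 := mul_eq_one_comm.1 k2
  ext v
  exact DFunLike.congr_fun k3 v

theorem transport_mul_s4 (B : g →ₗ[ℝ] g →ₗ[ℝ] g) (hB : IsLieBracket B)
    (γ δ m : C(Set.Icc (0:ℝ) 1, g)) (hm : ∀ t, m t = pathMul B γ δ t) :
    ∀ t ∈ Set.Icc (0:ℝ) 1, transport B (pathExt m) t =
      (transport B (pathExt γ) t).comp (transport B (pathExt δ) t) := by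
  obtain ⟨h0, h, -⟩ := transport_spec B (continuous_pathExt γ)
  obtain ⟨k0, k, -⟩ := transport_spec B (continuous_pathExt δ)
  refine transport_unique B (continuous_pathExt m)
    (A := fun t => (transport B (pathExt γ) t).comp (transport B (pathExt δ) t)) ?_ ?_
  · simp only [h0, k0]; rfl
  · intro t ht
    refine ((h t ht).clm_comp (k t ht)).congr_deriv ?_
    have e : pathExt m t = pathExt γ t + transport B (pathExt γ) t (pathExt δ t) := by
      have := hm ⟨t, ht⟩
      simp only [pathMul, ← pathExt_coe] at this
      exact this
    ext v
    simp only [ContinuousLinearMap.comp_apply, ContinuousLinearMap.add_apply, adL_apply, e,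
      map_add, LinearMap.add_apply, transport_aut B hB (continuous_pathExt γ) t ht]

end

/-- The multiplication `(γ·δ)(t) = γ t + A_γ(t)(δ t)` turns the set
`P(g) = C([0,1], g)` of continuous paths into a group: it is associative, the
constant path `0` is a two-sided identity, and `ι(γ)(t) = -A_γ(t)⁻¹(γ t)` is a
two-sided inverse of `γ`. -/
theorem pathGroup_group_axioms {g : Type*}
    [NormedAddCommGroup g] [NormedSpace ℝ g] [FiniteDimensional ℝ g]
    (B : g →ₗ[ℝ] g →ₗ[ℝ] g) (hB : IsLieBracket B) :
    -- associativity: (γ·δ)·ε = γ·(δ·ε)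
    (∀ γ δ ε m m' : C(Set.Icc (0:ℝ) 1, g),
      (∀ t, m t = pathMul B γ δ t) → (∀ t, m' t = pathMul B δ ε t) →
      ∀ t, pathMul B m ε t = pathMul B γ m' t) ∧
    -- the constant path 0 is a two-sided identity
    (∀ γ : C(Set.Icc (0:ℝ) 1, g),
      (∀ t, pathMul B 0 γ t = γ t) ∧ (∀ t, pathMul B γ 0 t = γ t)) ∧
    -- ι(γ) is a two-sided inverse of γ
    (∀ γ ι : C(Set.Icc (0:ℝ) 1, g), (∀ t, ι t = pathInv B γ t) →
      (∀ t, pathMul B γ ι t = 0) ∧ (∀ t, pathMul B ι γ t = 0)) := by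
  refine ⟨?_, ?_, ?_⟩
  · intro γ δ ε m m' hm hm' t
    simp only [pathMul, hm t, hm' t, transport_mul_s4 B hB γ δ m hm t t.2, map_add,
      ContinuousLinearMap.comp_apply, add_assoc]
  · intro γ
    refine ⟨fun t => ?_, fun t => by simp [pathMul]⟩
    have h1 := transport_unique B (continuous_pathExt (0 : C(Set.Icc (0:ℝ) 1, g)))
      (A := fun _ => 1) rfl (fun s hs => by
        refine (hasDerivWithinAt_const s _ _).congr_deriv ?_
        have e : pathExt (0 : C(Set.Icc (0:ℝ) 1, g)) s = 0 := pathExt_coe _ ⟨s, hs⟩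
        ext v
        simp [e, adL_apply]) t t.2
    simp [pathMul, h1]
  · intro γ ι hι
    obtain ⟨C, hC0, hC, hCA⟩ := transport_inv B (continuous_pathExt γ)
    have hinv : ∀ t ∈ Set.Icc (0:ℝ) 1,
        Ring.inverse (transport B (pathExt γ) t) = C t := fun t ht =>
      Ring.inverse_unit (⟨transport B (pathExt γ) t, C t, (hCA t ht).2, (hCA t ht).1⟩ :
        (g →L[ℝ] g)ˣ)
    have hCA1 : ∀ t ∈ Set.Icc (0:ℝ) 1, ∀ v, C t (transport B (pathExt γ) t v) = v :=
      fun t ht v => DFunLike.congr_fun (hCA t ht).1 v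
    have hCA2 : ∀ t ∈ Set.Icc (0:ℝ) 1, ∀ v, transport B (pathExt γ) t (C t v) = v :=
      fun t ht v => DFunLike.congr_fun (hCA t ht).2 v
    have hι' : ∀ t, ι t = -(C t (γ t)) := fun t => by
      rw [hι t, pathInv, hinv t t.2]
    refine ⟨fun t => by simp [pathMul, hι' t, hCA2 t t.2], fun t => ?_⟩
    have h1 := transport_unique B (continuous_pathExt ι) (A := C) hC0 (fun s hs => by
      refine (hC s hs).congr_deriv ?_
      have e : pathExt ι s = -(C s (pathExt γ s)) := by
        have := hι' ⟨s, hs⟩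
        simp only [← pathExt_coe] at this
        exact this
      ext v
      simp only [ContinuousLinearMap.neg_apply, ContinuousLinearMap.comp_apply, adL_apply, e,
        map_neg, LinearMap.neg_apply]
      congr 1
      have := transport_aut B hB (continuous_pathExt γ) s hs (C s (pathExt γ s)) (C s v)
      rw [hCA2 s hs, hCA2 s hs] at this
      rw [← this, hCA1 s hs]) t t.2
    simp [pathMul, hι' t, h1]
end

section
/- Let g be a finite-dimensional real Lie algebra with a norm, and let P(g) = C([0,1], g) be the Banach space of continuous paths [0,1] → g equipped with the supremum norm. Then the multiplication map P(g) × P(g) → P(g), (γ, δ) ↦ γ·δ where (γ·δ)(t) = γ(t) + A_γ(t)(δ(t)), and the inversion map P(g) → P(g), γ ↦ ι(γ) where ι(γ)(t) = −A_γ(t)⁻¹(γ(t)), are infinitely differentiable (C^∞) maps of Banach spaces; in particular P(g) with this multiplication is a Banach Lie group. -/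
set_option linter.unusedSectionVars false

section Generic

variable {X : Type*} [NormedAddCommGroup X] [NormedSpace ℝ X] [CompleteSpace X]

lemma isUnit_one_sub_of_pow_lt (V : X →L[ℝ] X) (n : ℕ) (h : ‖V ^ n‖ < 1) : IsUnit (1 - V) := by
  have h2 : IsUnit (1 - V ^ n) := isUnit_one_sub_of_norm_lt_one h
  rw [← mul_neg_geom_sum] at h2
  refine ((Commute.isUnit_mul_iff ?_).1 h2).1
  rw [Commute, SemiconjBy, mul_neg_geom_sum, geom_sum_mul_neg]

lemma inverse_contDiff {P : Type*} [NormedAddCommGroup P] [NormedSpace ℝ P]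
    (J : X →L[ℝ] X) (T : P →L[ℝ] X →L[ℝ] X)
    (hu : ∀ p, IsUnit (1 - J ∘L (T p))) (e : X) :
    ContDiff ℝ (⊤ : ℕ∞) (fun p => Ring.inverse (1 - J ∘L (T p)) e) := by
  have h1 : ContDiff ℝ (⊤ : ℕ∞) (fun p => (1 : X →L[ℝ] X) - J ∘L (T p)) :=
    contDiff_const.sub (contDiff_const.clm_comp T.contDiff)
  have h2 : ContDiff ℝ (⊤ : ℕ∞) (fun p => Ring.inverse (1 - J ∘L (T p))) := by
    rw [contDiff_iff_contDiffAt]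
    intro p
    obtain ⟨u, hu'⟩ := hu p
    have h3 := contDiffAt_ringInverse ℝ (n := ((⊤ : ℕ∞) : WithTop ℕ∞)) u
    rw [hu'] at h3
    exact h3.comp p h1.contDiffAt
  exact h2.clm_apply contDiff_const

end Generic

section Volterra

variable {F : Type*} [NormedAddCommGroup F] [NormedSpace ℝ F]

lemma pathExt_continuous' (f : C(Set.Icc (0:ℝ) 1, F)) : Continuous (pathExt f) :=
  f.continuous.Icc_extend'

lemma pathExt_apply (f : C(Set.Icc (0:ℝ) 1, F)) (t : Set.Icc (0:ℝ) 1) : pathExt f t = f t :=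
  Set.IccExtend_val _ _ t

lemma pathExt_apply_mem (f : C(Set.Icc (0:ℝ) 1, F)) {t : ℝ} (ht : t ∈ Set.Icc (0:ℝ) 1) :
    pathExt f t = f ⟨t, ht⟩ :=
  Set.IccExtend_of_mem _ _ ht

lemma pathExt_norm_le (f : C(Set.Icc (0:ℝ) 1, F)) (t : ℝ) : ‖pathExt f t‖ ≤ ‖f‖ := by
  unfold pathExt Set.IccExtend
  exact f.norm_coe_le_norm _

lemma pathExt_intervalIntegrable (f : C(Set.Icc (0:ℝ) 1, F)) (a b : ℝ) :
    IntervalIntegrable (pathExt f) MeasureTheory.volume a b :=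
  (pathExt_continuous' f).intervalIntegrable a b

/-- The integration operator on continuous paths. -/
noncomputable def primOp (F : Type*) [NormedAddCommGroup F] [NormedSpace ℝ F] :
    C(Set.Icc (0:ℝ) 1, F) →L[ℝ] C(Set.Icc (0:ℝ) 1, F) :=
  LinearMap.mkContinuous
    { toFun := fun f =>
        ⟨fun t => ∫ s in (0:ℝ)..t, pathExt f s,
          (intervalIntegral.continuous_primitive
            (fun a b => pathExt_intervalIntegrable f a b) 0).comp continuous_subtype_val⟩
      map_add' := by
        intro f h
        ext t
        simp only [ContinuousMap.coe_mk, ContinuousMap.add_apply]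
        rw [← intervalIntegral.integral_add (pathExt_intervalIntegrable f _ _)
          (pathExt_intervalIntegrable h _ _)]
        rfl
      map_smul' := by
        intro c f
        ext t
        simp only [ContinuousMap.coe_mk, ContinuousMap.smul_apply, RingHom.id_apply]
        rw [← intervalIntegral.integral_smul]
        rfl } 1 (by
    intro f
    rw [ContinuousMap.norm_le _ (by positivity)]
    intro t
    simp only [LinearMap.coe_mk, AddHom.coe_mk, ContinuousMap.coe_mk]
    refine (intervalIntegral.norm_integral_le_of_norm_le_const
      (C := ‖f‖) (fun s _ => pathExt_norm_le f s)).trans ?_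
    have h0 := t.2.1
    have h1 := t.2.2
    rw [sub_zero, abs_of_nonneg h0]
    nlinarith [norm_nonneg f])

lemma primOp_apply (f : C(Set.Icc (0:ℝ) 1, F)) (t : Set.Icc (0:ℝ) 1) :
    primOp F f t = ∫ s in (0:ℝ)..t, pathExt f s := rfl

lemma volterra_pow_bound (T : C(Set.Icc (0:ℝ) 1, F) →L[ℝ] C(Set.Icc (0:ℝ) 1, F)) (M : ℝ)
    (hM : 0 ≤ M) (hT : ∀ f t, ‖T f t‖ ≤ M * ‖f t‖) (n : ℕ) (f : C(Set.Icc (0:ℝ) 1, F))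
    (t : Set.Icc (0:ℝ) 1) :
    ‖((primOp F ∘L T) ^ n) f t‖ ≤ M ^ n / (n.factorial : ℝ) * ‖f‖ * (t : ℝ) ^ n := by
  induction n generalizing t with
  | zero => simpa using f.norm_coe_le_norm t
  | succ n ih =>
    rw [pow_succ']
    have h0 : (((primOp F ∘L T) * (primOp F ∘L T) ^ n) f) t =
      ∫ s in (0:ℝ)..t, pathExt (T (((primOp F ∘L T) ^ n) f)) s := rfl
    rw [h0]
    refine (intervalIntegral.norm_integral_le_of_norm_le
      (g := fun s : ℝ => (M ^ (n+1) / (n.factorial : ℝ) * ‖f‖) * s ^ n) t.2.1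
      (Filter.Eventually.of_forall ?_) (Continuous.intervalIntegrable (by fun_prop) _ _)).trans ?_
    · intro s hs
      have hs' : s ∈ Set.Icc (0:ℝ) 1 := ⟨hs.1.le, hs.2.trans t.2.2⟩
      rw [pathExt_apply_mem _ hs']
      refine (hT _ _).trans ((mul_le_mul_of_nonneg_left (ih ⟨s, hs'⟩) hM).trans (le_of_eq ?_))
      simp only
      ring
    · rw [intervalIntegral.integral_const_mul, integral_pow]
      apply le_of_eq
      rw [Nat.factorial_succ]
      push_cast
      have : (n.factorial : ℝ) ≠ 0 := by positivity
      field_simp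
      simp

lemma volterra_isUnit [CompleteSpace F]
    (T : C(Set.Icc (0:ℝ) 1, F) →L[ℝ] C(Set.Icc (0:ℝ) 1, F)) (M : ℝ)
    (hM : 0 ≤ M) (hT : ∀ f t, ‖T f t‖ ≤ M * ‖f t‖) : IsUnit (1 - primOp F ∘L T) := by
  obtain ⟨n, hn⟩ := ((FloorSemiring.tendsto_pow_div_factorial_atTop M).eventually
    (gt_mem_nhds one_pos)).exists
  have h1 : ‖(primOp F ∘L T) ^ n‖ < 1 := by
    refine lt_of_le_of_lt (ContinuousLinearMap.opNorm_le_bound _ (by positivity) ?_) hn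
    intro f
    rw [ContinuousMap.norm_le _ (by positivity)]
    intro t
    refine (volterra_pow_bound T M hM hT n f t).trans ?_
    have h2 : (t:ℝ) ^ n ≤ 1 := pow_le_one₀ t.2.1 t.2.2
    exact mul_le_of_le_one_right (by positivity) h2
  exact isUnit_one_sub_of_pow_lt (X := C(Set.Icc (0:ℝ) 1, F)) _ n h1

/-- The solution of the Volterra equation, with derivative. -/
lemma volterra_solution [CompleteSpace F]
    (T : C(Set.Icc (0:ℝ) 1, F) →L[ℝ] C(Set.Icc (0:ℝ) 1, F))
    (hu : IsUnit (1 - primOp F ∘L T)) (e : F) (f : C(Set.Icc (0:ℝ) 1, F))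
    (hf : f = Ring.inverse (1 - primOp F ∘L T) (ContinuousMap.const _ e)) :
    pathExt f 0 = e ∧ ∀ t ∈ Set.Icc (0:ℝ) 1,
      HasDerivWithinAt (pathExt f) (pathExt (T f) t) (Set.Icc (0:ℝ) 1) t := by
  have h1 : (1 - primOp F ∘L T) f = ContinuousMap.const _ e := by
    rw [hf, ← mul_apply_eq_comp, Ring.mul_inverse_cancel _ hu]
    rfl
  have h2 : ∀ t ∈ Set.Icc (0:ℝ) 1, pathExt f t = e + ∫ s in (0:ℝ)..t, pathExt (T f) s := by
    intro t ht
    have h3 := congrArg (fun k : C(Set.Icc (0:ℝ) 1, F) => k ⟨t, ht⟩) h1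
    have h4 : f ⟨t, ht⟩ - ∫ s in (0:ℝ)..t, pathExt (T f) s = e := h3
    rw [pathExt_apply_mem f ht, ← h4]
    abel
  refine ⟨by simpa using h2 0 (by simp), fun t ht => ?_⟩
  have h3 : HasDerivAt (fun t => e + ∫ s in (0:ℝ)..t, pathExt (T f) s) (pathExt (T f) t) t :=
    (intervalIntegral.integral_hasDerivAt_right (pathExt_intervalIntegrable _ _ _)
      (pathExt_continuous' _).aestronglyMeasurable.stronglyMeasurableAtFilter
      (pathExt_continuous' _).continuousAt).const_add e
  exact h3.hasDerivWithinAt.congr h2 (h2 t ht)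

lemma volterra_contDiff {P : Type*} [NormedAddCommGroup P] [NormedSpace ℝ P] [CompleteSpace F]
    (T : P →L[ℝ] C(Set.Icc (0:ℝ) 1, F) →L[ℝ] C(Set.Icc (0:ℝ) 1, F))
    (hu : ∀ p, IsUnit (1 - primOp F ∘L (T p))) (e : C(Set.Icc (0:ℝ) 1, F)) :
    ContDiff ℝ (⊤ : ℕ∞) (fun p => Ring.inverse (1 - primOp F ∘L (T p)) e) := by
  exact inverse_contDiff (X := C(Set.Icc (0:ℝ) 1, F)) (primOp F) T hu e

end Volterra

section Transport

variable {g : Type*} [NormedAddCommGroup g] [NormedSpace ℝ g] [FiniteDimensional ℝ g]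

/-- `ad` as a continuous linear map. -/
noncomputable def adCLM (B : g →ₗ[ℝ] g →ₗ[ℝ] g) : g →L[ℝ] (g →L[ℝ] g) :=
  LinearMap.toContinuousLinearMap (LinearMap.toContinuousLinearMap.toLinearMap ∘ₗ B)

lemma adCLM_apply (B : g →ₗ[ℝ] g →ₗ[ℝ] g) (x : g) : adCLM B x = adL B x := rfl

/-- `ad` on paths. -/
noncomputable def adPath (B : g →ₗ[ℝ] g →ₗ[ℝ] g) :
    C(Set.Icc (0:ℝ) 1, g) →L[ℝ] C(Set.Icc (0:ℝ) 1, g →L[ℝ] g) :=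
  (adCLM B).compLeftContinuous ℝ _

lemma adPath_apply (B : g →ₗ[ℝ] g →ₗ[ℝ] g) (γ : C(Set.Icc (0:ℝ) 1, g)) (t) :
    adPath B γ t = adL B (γ t) := rfl

/-- Left multiplication by `ad γ`. -/
noncomputable def leftOp (B : g →ₗ[ℝ] g →ₗ[ℝ] g) : C(Set.Icc (0:ℝ) 1, g) →L[ℝ]
    C(Set.Icc (0:ℝ) 1, g →L[ℝ] g) →L[ℝ] C(Set.Icc (0:ℝ) 1, g →L[ℝ] g) :=
  (ContinuousLinearMap.mul ℝ C(Set.Icc (0:ℝ) 1, g →L[ℝ] g)) ∘L adPath B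

/-- Right multiplication by `-ad γ`. -/
noncomputable def rightOp (B : g →ₗ[ℝ] g →ₗ[ℝ] g) : C(Set.Icc (0:ℝ) 1, g) →L[ℝ]
    C(Set.Icc (0:ℝ) 1, g →L[ℝ] g) →L[ℝ] C(Set.Icc (0:ℝ) 1, g →L[ℝ] g) :=
  -((ContinuousLinearMap.mul ℝ C(Set.Icc (0:ℝ) 1, g →L[ℝ] g)).flip ∘L adPath B)

lemma leftOp_apply (B : g →ₗ[ℝ] g →ₗ[ℝ] g) (γ : C(Set.Icc (0:ℝ) 1, g)) (f t) :
    leftOp B γ f t = adL B (γ t) * f t := rfl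

lemma rightOp_apply (B : g →ₗ[ℝ] g →ₗ[ℝ] g) (γ : C(Set.Icc (0:ℝ) 1, g)) (f t) :
    rightOp B γ f t = -(f t * adL B (γ t)) := rfl

lemma leftOp_isUnit (B : g →ₗ[ℝ] g →ₗ[ℝ] g) (γ : C(Set.Icc (0:ℝ) 1, g)) :
    IsUnit (1 - primOp _ ∘L (leftOp B γ)) := by
  have : CompleteSpace g := FiniteDimensional.complete ℝ g
  refine volterra_isUnit _ ‖adPath B γ‖ (norm_nonneg (adPath B γ)) fun f t => ?_
  rw [leftOp_apply]
  refine (norm_mul_le _ _).trans (mul_le_mul_of_nonneg_right ?_ (norm_nonneg _))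
  exact (adPath B γ).norm_coe_le_norm t

lemma rightOp_isUnit (B : g →ₗ[ℝ] g →ₗ[ℝ] g) (γ : C(Set.Icc (0:ℝ) 1, g)) :
    IsUnit (1 - primOp _ ∘L (rightOp B γ)) := by
  have : CompleteSpace g := FiniteDimensional.complete ℝ g
  refine volterra_isUnit _ ‖adPath B γ‖ (norm_nonneg (adPath B γ)) fun f t => ?_
  rw [rightOp_apply, norm_neg, mul_comm]
  refine (norm_mul_le _ _).trans (mul_le_mul_of_nonneg_left ?_ (norm_nonneg _))
  exact (adPath B γ).norm_coe_le_norm t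

/-- The transport as a continuous path. -/
noncomputable def solA (B : g →ₗ[ℝ] g →ₗ[ℝ] g) (γ : C(Set.Icc (0:ℝ) 1, g)) :
    C(Set.Icc (0:ℝ) 1, g →L[ℝ] g) :=
  Ring.inverse (1 - primOp _ ∘L (leftOp B γ)) (ContinuousMap.const _ 1)

/-- The inverse transport as a continuous path. -/
noncomputable def solC (B : g →ₗ[ℝ] g →ₗ[ℝ] g) (γ : C(Set.Icc (0:ℝ) 1, g)) :
    C(Set.Icc (0:ℝ) 1, g →L[ℝ] g) :=
  Ring.inverse (1 - primOp _ ∘L (rightOp B γ)) (ContinuousMap.const _ 1)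

lemma solA_contDiff (B : g →ₗ[ℝ] g →ₗ[ℝ] g) : ContDiff ℝ (⊤ : ℕ∞) (solA B) := by
  have : CompleteSpace g := FiniteDimensional.complete ℝ g
  exact volterra_contDiff (F := g →L[ℝ] g) (P := C(Set.Icc (0:ℝ) 1, g)) (leftOp B) (leftOp_isUnit B) _

lemma solC_contDiff (B : g →ₗ[ℝ] g →ₗ[ℝ] g) : ContDiff ℝ (⊤ : ℕ∞) (solC B) := by
  have : CompleteSpace g := FiniteDimensional.complete ℝ g
  exact volterra_contDiff (F := g →L[ℝ] g) (P := C(Set.Icc (0:ℝ) 1, g)) (rightOp B) (rightOp_isUnit B) _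

lemma solA_isTransport (B : g →ₗ[ℝ] g →ₗ[ℝ] g) (γ : C(Set.Icc (0:ℝ) 1, g)) :
    IsTransport B (pathExt γ) (pathExt (solA B γ)) := by
  have : CompleteSpace g := FiniteDimensional.complete ℝ g
  obtain ⟨h1, h2⟩ := volterra_solution _ (leftOp_isUnit B γ) 1 (solA B γ) rfl
  refine ⟨h1, h2, ?_⟩
  exact (pathExt_continuous' (leftOp B γ (solA B γ))).continuousOn

lemma solC_mul (B : g →ₗ[ℝ] g →ₗ[ℝ] g) (γ : C(Set.Icc (0:ℝ) 1, g)) (A : ℝ → (g →L[ℝ] g))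
    (hA : IsTransport B (pathExt γ) A) (t : Set.Icc (0:ℝ) 1) : solC B γ t * A t = 1 := by
  have : CompleteSpace g := FiniteDimensional.complete ℝ g
  obtain ⟨h1, h2⟩ := volterra_solution _ (rightOp_isUnit B γ) 1 (solC B γ) rfl
  have hd : ∀ s ∈ Set.Icc (0:ℝ) 1, HasDerivWithinAt (fun s => pathExt (solC B γ) s * A s) 0
      (Set.Icc (0:ℝ) 1) s := by
    intro s hs
    have h3 := (h2 s hs).mul (hA.2.1 s hs)
    have hz : pathExt (rightOp B γ (solC B γ)) s * A s +
        pathExt (solC B γ) s * (adL B (pathExt γ s)).comp (A s) = 0 := by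
      rw [pathExt_apply_mem _ hs, pathExt_apply_mem _ hs, pathExt_apply_mem _ hs, rightOp_apply]
      change _ + solC B γ ⟨s, hs⟩ * (adL B (γ ⟨s, hs⟩) * A s) = 0
      rw [neg_mul, mul_assoc, neg_add_cancel]
    exact hz ▸ h3
  have h4 := constant_of_derivWithin_zero (fun s hs => (hd s hs).differentiableWithinAt)
    (fun s hs => (hd s (Set.Ico_subset_Icc_self hs)).derivWithin
      (uniqueDiffOn_Icc zero_lt_one s (Set.Ico_subset_Icc_self hs))) t t.2
  simpa [h1, hA.1, pathExt_apply] using h4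

lemma clm_mul_eq_one_comm {a b : g →L[ℝ] g} (h : a * b = 1) : b * a = 1 := by
  have h1 : (a : g →ₗ[ℝ] g) * (b : g →ₗ[ℝ] g) = 1 := by
    ext x
    exact congrArg (fun k : g →L[ℝ] g => k x) h
  have h2 := mul_eq_one_comm.1 h1
  ext x
  exact congrArg (fun k : g →ₗ[ℝ] g => k x) h2

lemma transport_isTransport (B : g →ₗ[ℝ] g →ₗ[ℝ] g) (γ : C(Set.Icc (0:ℝ) 1, g)) :
    IsTransport B (pathExt γ) (transport B (pathExt γ)) := by
  have h : ∃ A : ℝ → (g →L[ℝ] g), IsTransport B (pathExt γ) A := ⟨_, solA_isTransport B γ⟩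
  unfold transport
  rw [dif_pos h]
  exact h.choose_spec

lemma transport_eq (B : g →ₗ[ℝ] g →ₗ[ℝ] g) (γ : C(Set.Icc (0:ℝ) 1, g)) (t : Set.Icc (0:ℝ) 1) :
    transport B (pathExt γ) t = solA B γ t := by
  have h1 := solC_mul B γ _ (transport_isTransport B γ) t
  have h2 := solC_mul B γ _ (solA_isTransport B γ) t
  rw [pathExt_apply] at h2
  exact (left_inv_eq_right_inv (clm_mul_eq_one_comm h2) h1).symm

lemma inverse_transport_eq (B : g →ₗ[ℝ] g →ₗ[ℝ] g) (γ : C(Set.Icc (0:ℝ) 1, g))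
    (t : Set.Icc (0:ℝ) 1) :
    Ring.inverse (transport B (pathExt γ) t) = solC B γ t := by
  have h1 := solC_mul B γ _ (transport_isTransport B γ) t
  exact Ring.inverse_unit ⟨_, _, clm_mul_eq_one_comm h1, h1⟩

/-- Pointwise evaluation of paths of endomorphisms on paths. -/
noncomputable def evalPath (g : Type*) [NormedAddCommGroup g] [NormedSpace ℝ g] :
    C(Set.Icc (0:ℝ) 1, g →L[ℝ] g) →L[ℝ] C(Set.Icc (0:ℝ) 1, g) →L[ℝ] C(Set.Icc (0:ℝ) 1, g) :=
  LinearMap.mkContinuous₂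
    (LinearMap.mk₂ ℝ (fun (A : C(Set.Icc (0:ℝ) 1, g →L[ℝ] g)) (δ : C(Set.Icc (0:ℝ) 1, g)) => (⟨fun t => A t (δ t), by fun_prop⟩ : C(Set.Icc (0:ℝ) 1, g)))
      (fun _ _ _ => by ext; simp) (fun _ _ _ => by ext; simp) (fun _ _ _ => by ext; simp)
      (fun _ _ _ => by ext; simp)) 1 (by
    intro A δ
    rw [ContinuousMap.norm_le _ (by positivity)]
    intro t
    rw [one_mul]
    exact (A t).le_of_opNorm_le_of_le (A.norm_coe_le_norm t) (δ.norm_coe_le_norm t))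

lemma evalPath_apply (A : C(Set.Icc (0:ℝ) 1, g →L[ℝ] g)) (δ : C(Set.Icc (0:ℝ) 1, g)) (t) :
    evalPath g A δ t = A t (δ t) := rfl

end Transport

/-- The multiplication `(γ, δ) ↦ γ·δ` and inversion `γ ↦ ι(γ)` of the path group
`P(g) = C([0,1], g)` (a Banach space with the supremum norm) are infinitely
differentiable maps of Banach spaces; in particular `P(g)` is a Banach Lie group. -/
theorem pathGroup_smooth {g : Type*}
    [NormedAddCommGroup g] [NormedSpace ℝ g] [FiniteDimensional ℝ g]
    (B : g →ₗ[ℝ] g →ₗ[ℝ] g) (hB : IsLieBracket B) :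
    ∃ (mul : C(Set.Icc (0:ℝ) 1, g) × C(Set.Icc (0:ℝ) 1, g) → C(Set.Icc (0:ℝ) 1, g))
      (inv : C(Set.Icc (0:ℝ) 1, g) → C(Set.Icc (0:ℝ) 1, g)),
      (∀ γ δ : C(Set.Icc (0:ℝ) 1, g), ∀ t, mul (γ, δ) t = pathMul B γ δ t) ∧
      (∀ γ : C(Set.Icc (0:ℝ) 1, g), ∀ t, inv γ t = pathInv B γ t) ∧
      ContDiff ℝ (⊤ : ℕ∞) mul ∧ ContDiff ℝ (⊤ : ℕ∞) inv := by
  refine ⟨fun p => p.1 + evalPath g (solA B p.1) p.2, fun γ => -(evalPath g (solC B γ) γ),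
    ?_, ?_, ?_, ?_⟩
  · intro γ δ t
    rw [pathMul, transport_eq]
    rfl
  · intro γ t
    rw [pathInv, inverse_transport_eq]
    rfl
  · exact contDiff_fst.add ((((evalPath g).contDiff.comp
      ((solA_contDiff B).comp contDiff_fst))).clm_apply contDiff_snd)
  · exact (((evalPath g).contDiff.comp (solC_contDiff B)).clm_apply contDiff_id).neg
end

section
/- Let g be a finite-dimensional real Lie algebra with a norm and let P(g) = C([0,1], g) be the path group with multiplication (γ·δ)(t) = γ(t) + A_γ(t)(δ(t)). Let P(g)₀ be the set of all γ ∈ P(g) for which there exists a map Γ : [0,1] → P(g), continuously differentiable as a map from [0,1] into the Banach space C([0,1], g) with supremum norm, such that Γ(0) is the constant path 0, Γ(1) = γ, and for every s ∈ [0,1] one has ∫₀¹ A_{Γ(s)}(t)⁻¹ ((dΓ/ds)(s)(t)) dt = 0 in g. Then P(g)₀ is a normal subgroup of P(g). -/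
/-- `InPathZero B γ` says that `γ` belongs to the subset `P(g)₀` of the path group
`P(g) = C([0,1], g)`: there is a continuously differentiable family
`Γ : [0,1] → P(g)` (with derivative `Γ'`) joining the constant path `0` to `γ`
such that `∫₀¹ A_{Γ s}(t)⁻¹ (Γ' s (t)) dt = 0` for all `s ∈ [0,1]`. -/
noncomputable def InPathZero {g : Type*} [NormedAddCommGroup g] [NormedSpace ℝ g]
    [FiniteDimensional ℝ g] (B : g →ₗ[ℝ] g →ₗ[ℝ] g)
    (γ : C(Set.Icc (0:ℝ) 1, g)) : Prop :=
  ∃ Γ Γ' : ℝ → C(Set.Icc (0:ℝ) 1, g),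
    (∀ s ∈ Set.Icc (0:ℝ) 1, HasDerivWithinAt Γ (Γ' s) (Set.Icc (0:ℝ) 1) s) ∧
    ContinuousOn Γ' (Set.Icc (0:ℝ) 1) ∧
    Γ 0 = 0 ∧ Γ 1 = γ ∧
    ∀ s ∈ Set.Icc (0:ℝ) 1,
      (∫ t in (0:ℝ)..1,
        Ring.inverse (transport B (pathExt (Γ s)) t) (pathExt (Γ' s) t)) = 0

namespace PZ

set_option autoImplicit false
set_option linter.unusedSectionVars false

abbrev I01 : Type := Set.Icc (0:ℝ) 1

section volterra

variable {F : Type*} [NormedAddCommGroup F] [NormedSpace ℝ F]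

lemma ext_cont (f : C(I01, F)) : Continuous (pathExt f) :=
  Continuous.Icc_extend' f.continuous

lemma ext_apply (f : C(I01, F)) (t : I01) : pathExt f (t : ℝ) = f t :=
  Set.IccExtend_val _ _ t

lemma ext_mem (f : C(I01, F)) (t : ℝ) (ht : t ∈ Set.Icc (0:ℝ) 1) : pathExt f t = f ⟨t, ht⟩ :=
  ext_apply f ⟨t, ht⟩

/-- `f'` is the derivative of `f` on `[0,1]`. -/
def Dv (f f' : C(I01, F)) : Prop :=
  ∀ t : I01, HasDerivWithinAt (pathExt f) (f' t) (Set.Icc (0:ℝ) 1) t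

lemma ext_norm_le (f : C(I01, F)) (t : ℝ) : ‖pathExt f t‖ ≤ ‖f‖ := f.norm_coe_le_norm _

lemma int_norm_le (f : C(I01, F)) (t : I01) : ‖∫ τ in (0:ℝ)..t, pathExt f τ‖ ≤ ‖f‖ := by
  have h := intervalIntegral.norm_integral_le_of_norm_le_const (a := (0:ℝ)) (b := (t:ℝ))
    (f := pathExt f) (C := ‖f‖) (fun x _ => ext_norm_le f x)
  have h1 : |(t:ℝ) - 0| ≤ 1 := by
    rw [sub_zero, abs_of_nonneg t.2.1]; exact t.2.2
  calc _ ≤ _ := h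
    _ ≤ ‖f‖ * 1 := by gcongr
    _ = _ := mul_one _

variable [CompleteSpace F]

/-- The Volterra operator. -/
noncomputable def V : C(I01, F) →L[ℝ] C(I01, F) :=
  LinearMap.mkContinuous
    { toFun := fun f => ⟨fun t => ∫ τ in (0:ℝ)..t, pathExt f τ,
        (intervalIntegral.continuous_primitive
          (fun a b => (ext_cont f).intervalIntegrable a b) 0).comp continuous_subtype_val⟩
      map_add' := by
        intro f g
        ext t
        exact intervalIntegral.integral_add ((ext_cont f).intervalIntegrable _ _)
          ((ext_cont g).intervalIntegrable _ _)
      map_smul' := by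
        intro c f
        ext t
        exact intervalIntegral.integral_smul c _ } 1
    (by
      intro f
      rw [one_mul]
      exact (ContinuousMap.norm_le _ (norm_nonneg _)).2 (fun t => int_norm_le f t))

lemma V_apply (f : C(I01, F)) (t : I01) : V f t = ∫ τ in (0:ℝ)..t, pathExt f τ := rfl

lemma V_zero (f : C(I01, F)) : V f (0 : I01) = 0 := by simp [V_apply]

lemma Dv_V (f : C(I01, F)) : Dv (V f) f := by
  intro t
  have h := (intervalIntegral.integral_hasDerivAt_right
    ((ext_cont f).intervalIntegrable 0 (t:ℝ))
    (ext_cont f).aestronglyMeasurable.stronglyMeasurableAtFilter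
    (ext_cont f).continuousAt).hasDerivWithinAt (s := Set.Icc (0:ℝ) 1)
  rw [ext_apply] at h
  refine h.congr (fun x hx => ?_) ?_
  · rw [ext_mem _ x hx, V_apply]
  · rw [ext_apply, V_apply]

lemma Dv.sub {f f' g g' : C(I01, F)} (hf : Dv f f') (hg : Dv g g') : Dv (f - g) (f' - g') :=
  fun t => (hf t).sub (hg t)

lemma Dv.add {f f' g g' : C(I01, F)} (hf : Dv f f') (hg : Dv g g') : Dv (f + g) (f' + g') :=
  fun t => (hf t).add (hg t)

lemma Dv_const (c : F) : Dv (ContinuousMap.const I01 c) 0 :=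
  fun _ => hasDerivWithinAt_const _ _ c

lemma Dv.const {f : C(I01, F)} (hf : Dv f 0) (h0 : f (0 : I01) = 0) : f = 0 := by
  have h := constant_of_derivWithin_zero (f := pathExt f) (a := 0) (b := 1)
    (fun t ht => (hf ⟨t, ht⟩).differentiableWithinAt)
    (fun t ht => (hf ⟨t, ht.1, ht.2.le⟩).derivWithin
      (uniqueDiffOn_Icc zero_lt_one _ ⟨ht.1, ht.2.le⟩))
  ext t
  have := h t t.2
  rw [ext_apply, ext_mem f 0 (by simp)] at this
  rw [this]
  exact h0

lemma Dv.unique {f g f' : C(I01, F)} (hf : Dv f f') (hg : Dv g f')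
    (h0 : f (0 : I01) = g (0 : I01)) : f = g := by
  rw [← sub_eq_zero]
  refine Dv.const ?_ (by simp [h0])
  simpa using hf.sub hg

lemma iter_bound (N : C(I01, F) →L[ℝ] C(I01, F)) (C : ℝ) (hC : 0 ≤ C)
    (hN : ∀ f t, ‖N f t‖ ≤ C * ‖f t‖) (n : ℕ) (f : C(I01, F)) (t : I01) :
    ‖((V.comp N) ^ n) f t‖ ≤ C ^ n * (t:ℝ) ^ n / n.factorial * ‖f‖ := by
  induction n generalizing t with
  | zero => simpa using f.norm_coe_le_norm t
  | succ n ih =>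
    rw [pow_succ']
    change ‖V (N (((V.comp N) ^ n) f)) t‖ ≤ _
    set h := ((V.comp N) ^ n) f with hh
    rw [V_apply]
    have key := intervalIntegral.norm_integral_le_of_norm_le (a := (0:ℝ)) (b := t)
      (f := pathExt (N h)) (μ := MeasureTheory.volume)
      (g := fun τ => (C ^ (n+1) / n.factorial * ‖f‖) * τ ^ n) t.2.1
      (Filter.Eventually.of_forall (fun τ hτ => by
        have hm : τ ∈ Set.Icc (0:ℝ) 1 := ⟨hτ.1.le, hτ.2.trans t.2.2⟩
        rw [ext_mem _ τ hm]
        refine (hN _ _).trans ?_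
        refine (mul_le_mul_of_nonneg_left (ih ⟨τ, hm⟩) hC).trans (le_of_eq ?_)
        simp only
        ring)) (Continuous.intervalIntegrable (by fun_prop) _ _)
    refine key.trans (le_of_eq ?_)
    rw [intervalIntegral.integral_const_mul, integral_pow, Nat.factorial_succ]
    push_cast
    have : (n.factorial : ℝ) ≠ 0 := by positivity
    have : (n + 1 : ℝ) ≠ 0 := by positivity
    field_simp
    simp

lemma isUnit_one_sub (N : C(I01, F) →L[ℝ] C(I01, F)) (C : ℝ) (hC : 0 ≤ C)
    (hN : ∀ f t, ‖N f t‖ ≤ C * ‖f t‖) : IsUnit (1 - V.comp N) := by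
  obtain ⟨n, hn⟩ := ((FloorSemiring.tendsto_pow_div_factorial_atTop C).eventually
    (gt_mem_nhds zero_lt_one)).exists
  have h1 : ‖(V.comp N) ^ n‖ < 1 := by
    refine lt_of_le_of_lt (ContinuousLinearMap.opNorm_le_bound _ (by positivity) ?_) hn
    intro f
    refine (ContinuousMap.norm_le _ (by positivity)).2 (fun t => ?_)
    refine (iter_bound N C hC hN n f t).trans ?_
    have : (t:ℝ) ^ n ≤ 1 := pow_le_one₀ t.2.1 t.2.2
    have h2 : C ^ n * (t:ℝ)^n ≤ C ^ n := mul_le_of_le_one_right (by positivity) this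
    gcongr
  have h2 := isUnit_one_sub_of_norm_lt_one (R := C(I01, F) →L[ℝ] C(I01, F)) h1
  rw [← mul_neg_geom_sum] at h2
  refine ((Commute.isUnit_mul_iff ?_).1 h2).1
  rw [Commute, SemiconjBy, mul_neg_geom_sum, geom_sum_mul_neg]

lemma eq_inverse (N : C(I01, F) →L[ℝ] C(I01, F)) (h : IsUnit (1 - V.comp N)) (X b : C(I01, F))
    (hX : X = b + V (N X)) : X = Ring.inverse (1 - V.comp N) b := by
  have : (1 - V.comp N) X = b := by
    change X - V (N X) = b
    rw [sub_eq_iff_eq_add]; exact hX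
  rw [← this, ← mul_apply_eq_comp, Ring.inverse_mul_cancel _ h]
  rfl

lemma inverse_eq (N : C(I01, F) →L[ℝ] C(I01, F)) (h : IsUnit (1 - V.comp N)) (b : C(I01, F)) :
    Ring.inverse (1 - V.comp N) b = b + V (N (Ring.inverse (1 - V.comp N) b)) := by
  have : (1 - V.comp N) (Ring.inverse (1 - V.comp N) b) = b := by
    rw [← mul_apply_eq_comp, Ring.mul_inverse_cancel _ h]
    rfl
  rw [← sub_eq_iff_eq_add]; exact this

lemma ode_unique (N : C(I01, F) →L[ℝ] C(I01, F)) (h : IsUnit (1 - V.comp N)) (X Y : C(I01, F))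
    (hX : Dv X (N X)) (hY : Dv Y (N Y)) (h0 : X (0 : I01) = Y (0 : I01)) : X = Y := by
  have h1 : X - Y = 0 + V (N (X - Y)) := by
    rw [zero_add]
    refine Dv.unique (f' := N (X - Y)) ?_ (Dv_V _) ?_
    · rw [map_sub]; exact hX.sub hY
    · rw [V_zero]; simp [h0]
  have h2 := eq_inverse N h _ _ h1
  rw [map_zero, sub_eq_zero] at h2
  exact h2

lemma ode_exists (N : C(I01, F) →L[ℝ] C(I01, F)) (h : IsUnit (1 - V.comp N)) (c : F) :
    Dv (Ring.inverse (1 - V.comp N) (ContinuousMap.const I01 c))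
      (N (Ring.inverse (1 - V.comp N) (ContinuousMap.const I01 c))) ∧
    Ring.inverse (1 - V.comp N) (ContinuousMap.const I01 c) (0 : I01) = c := by
  set X := Ring.inverse (1 - V.comp N) (ContinuousMap.const I01 c) with hX
  have h1 : X = ContinuousMap.const I01 c + V (N X) := inverse_eq N h _
  constructor
  · have := (Dv_const c).add (Dv_V (N X))
    rw [← h1, zero_add] at this
    exact this
  · rw [h1]
    simp [V_zero]

end volterra

section alg

variable {R : Type*} [NormedRing R] [NormedAlgebra ℝ R] [CompleteSpace R]

lemma Dv.of_eq {X X' Y' : C(I01, R)} (hX : Dv X X') (h : X' = Y') : Dv X Y' := h ▸ hX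

lemma Dv.mul {X X' Y Y' : C(I01, R)} (hX : Dv X X') (hY : Dv Y Y') :
    Dv (X * Y) (X' * Y + X * Y') := by
  intro t
  have h := (hX t).mul (hY t)
  rw [ext_apply, ext_apply] at h
  exact h

/-- left multiplication operators -/
noncomputable def Lm : C(I01, R) →L[ℝ] C(I01, R) →L[ℝ] C(I01, R) :=
  ContinuousLinearMap.mul ℝ C(I01, R)

/-- minus right multiplication operators -/
noncomputable def Rm (a : C(I01, R)) : C(I01, R) →L[ℝ] C(I01, R) :=
  -((ContinuousLinearMap.mul ℝ C(I01, R)).flip a)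

@[simp] lemma Lm_apply (a f : C(I01, R)) : Lm a f = a * f := rfl
@[simp] lemma Rm_apply (a f : C(I01, R)) : Rm a f = -(f * a) := rfl

lemma unitL (a : C(I01, R)) : IsUnit (1 - V.comp (Lm a)) := by
  refine isUnit_one_sub _ ‖a‖ (norm_nonneg _) (fun f t => ?_)
  change ‖a t * f t‖ ≤ _
  refine (norm_mul_le _ _).trans ?_
  gcongr
  exact a.norm_coe_le_norm t

lemma unitR (a : C(I01, R)) : IsUnit (1 - V.comp (Rm a)) := by
  refine isUnit_one_sub _ ‖a‖ (norm_nonneg _) (fun f t => ?_)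
  change ‖-(f t * a t)‖ ≤ _
  rw [norm_neg, mul_comm]
  refine (norm_mul_le _ _).trans ?_
  gcongr
  exact a.norm_coe_le_norm t

lemma unitLR (a : C(I01, R)) : IsUnit (1 - V.comp (Lm a + Rm a)) := by
  refine isUnit_one_sub _ (2 * ‖a‖) (by positivity) (fun f t => ?_)
  change ‖a t * f t + -(f t * a t)‖ ≤ _
  refine (norm_add_le _ _).trans ?_
  rw [norm_neg]
  have h1 := norm_mul_le (a t) (f t)
  have h2 := norm_mul_le (f t) (a t)
  have h3 := mul_le_mul_of_nonneg_right (a.norm_coe_le_norm t) (norm_nonneg (f t))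
  linarith

/-- the transport, as an element of the Banach algebra of paths -/
noncomputable def S (a : C(I01, R)) : C(I01, R) :=
  Ring.inverse (1 - V.comp (Lm a)) 1

noncomputable def Si (a : C(I01, R)) : C(I01, R) :=
  Ring.inverse (1 - V.comp (Rm a)) 1

lemma Dv_S (a : C(I01, R)) : Dv (S a) (a * S a) := (ode_exists _ (unitL a) 1).1
lemma S_zero (a : C(I01, R)) : S a 0 = 1 := (ode_exists _ (unitL a) 1).2
lemma Dv_Si (a : C(I01, R)) : Dv (Si a) (-(Si a * a)) := (ode_exists _ (unitR a) 1).1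
lemma Si_zero (a : C(I01, R)) : Si a 0 = 1 := (ode_exists _ (unitR a) 1).2

lemma L_unique (a X Y : C(I01, R)) (hX : Dv X (a * X)) (hY : Dv Y (a * Y))
    (h0 : X 0 = Y 0) : X = Y := ode_unique (Lm a) (unitL a) X Y hX hY h0

lemma S_unique (a X : C(I01, R)) (hX : Dv X (a * X)) (h0 : X 0 = 1) : X = S a :=
  L_unique a X (S a) hX (Dv_S a) (by rw [h0, S_zero])

lemma Dv_one : Dv (1 : C(I01, R)) 0 := Dv_const 1

lemma cneg_mul (X Y : C(I01, R)) : -X * Y = -(X * Y) := by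
  ext1 t
  exact neg_mul _ _

lemma cmul_neg (X Y : C(I01, R)) : X * -Y = -(X * Y) := by
  ext1 t
  exact mul_neg _ _

lemma Si_mul_S (a : C(I01, R)) : Si a * S a = 1 := by
  refine Dv.unique (f' := 0) ?_ Dv_one ?_
  · have := (Dv_Si a).mul (Dv_S a)
    refine this.of_eq ?_
    rw [cneg_mul, mul_assoc, neg_add_cancel]
  · simp [Si_zero, S_zero]

lemma S_mul_Si (a : C(I01, R)) : S a * Si a = 1 := by
  refine ode_unique (Lm a + Rm a) (unitLR a) _ _ ?_ ?_ ?_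
  · have := (Dv_S a).mul (Dv_Si a)
    refine this.of_eq ?_
    change _ = a * (S a * Si a) + -((S a * Si a) * a)
    rw [cmul_neg, mul_assoc, mul_assoc]
  · change Dv 1 (a * 1 + -(1 * a))
    simpa using Dv_one
  · simp [Si_zero, S_zero]

lemma Si_unique (a X : C(I01, R)) (h : X * S a = 1) : X = Si a := by
  calc X = X * (S a * Si a) := by rw [S_mul_Si, mul_one]
    _ = _ := by rw [← mul_assoc, h, one_mul]

lemma ring_inverse_S (a : C(I01, R)) (t : I01) : Ring.inverse (S a t) = Si a t := by
  have h1 : Si a t * S a t = 1 := congrArg (fun f : C(I01, R) => f t) (Si_mul_S a)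
  have h2 : S a t * Si a t = 1 := congrArg (fun f : C(I01, R) => f t) (S_mul_Si a)
  exact Ring.inverse_unit (⟨S a t, Si a t, h2, h1⟩ : Rˣ)

end alg

section lie

variable {g : Type*} [NormedAddCommGroup g] [NormedSpace ℝ g] [FiniteDimensional ℝ g]
  [CompleteSpace g]

/-- pointwise application -/
noncomputable def app : C(I01, g →L[ℝ] g) →L[ℝ] C(I01, g) →L[ℝ] C(I01, g) :=
  LinearMap.mkContinuous₂
    (LinearMap.mk₂ ℝ
      (fun (A : C(I01, g →L[ℝ] g)) (f : C(I01, g)) =>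
        (⟨fun t => A t (f t), A.continuous.clm_apply f.continuous⟩ : C(I01, g)))
      (fun _ _ _ => by ext; simp) (fun _ _ _ => by ext; simp)
      (fun _ _ _ => by ext; simp) (fun _ _ _ => by ext; simp)) 1
    (by
      intro A f
      rw [one_mul]
      refine (ContinuousMap.norm_le _ (by positivity)).2 (fun t => ?_)
      exact ((A t).le_opNorm _).trans (mul_le_mul (A.norm_coe_le_norm t) (f.norm_coe_le_norm t)
        (norm_nonneg _) (norm_nonneg A)))

@[simp] lemma app_apply (A : C(I01, g →L[ℝ] g)) (f : C(I01, g)) (t : I01) :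
    app A f t = A t (f t) := rfl

lemma Dv.app {X X' : C(I01, g →L[ℝ] g)} {f f' : C(I01, g)} (hX : Dv X X') (hY : Dv f f') :
    Dv (app X f) (PZ.app X' f + PZ.app X f') := by
  intro t
  have h := (hX t).clm_apply (hY t)
  rw [ext_apply, ext_apply] at h
  exact h

variable (B : g →ₗ[ℝ] g →ₗ[ℝ] g)

noncomputable def adC : g →L[ℝ] (g →L[ℝ] g) :=
  LinearMap.toContinuousLinearMap (LinearMap.toContinuousLinearMap.toLinearMap ∘ₗ B)

lemma adC_eq (x : g) : adC B x = adL B x := rfl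
lemma adC_apply (x y : g) : adC B x y = B x y := rfl

noncomputable def adM : C(I01, g) →L[ℝ] C(I01, g →L[ℝ] g) :=
  ContinuousLinearMap.compLeftContinuous ℝ I01 (adC B)

@[simp] lemma adM_apply (f : C(I01, g)) (t : I01) : adM B f t = adC B (f t) := rfl

lemma Dv.ad {f f' : C(I01, g)} (hf : Dv f f') : Dv (adM B f) (adM B f') := by
  intro t
  exact (adC B).hasFDerivAt.comp_hasDerivWithinAt _ (hf t)

lemma isTransport_S (γ : C(I01, g)) :
    IsTransport B (pathExt γ) (pathExt (S (adM B γ))) := by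
  refine ⟨?_, ?_, ?_⟩
  · rw [ext_mem _ 0 (by simp)]; exact S_zero _
  · intro t ht
    have := Dv_S (adM B γ) ⟨t, ht⟩
    rw [ext_mem _ t ht, ext_mem _ t ht]
    exact this
  · have h1 : Continuous (fun t => adC B (pathExt γ t)) := (adC B).continuous.comp (ext_cont γ)
    exact (h1.clm_comp (ext_cont (S (adM B γ)))).continuousOn

lemma transport_eq (γ : C(I01, g)) (t : I01) :
    transport B (pathExt γ) t = S (adM B γ) t := by
  have hex : ∃ A, IsTransport B (pathExt γ) A := ⟨_, isTransport_S B γ⟩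
  have ht : IsTransport B (pathExt γ) (transport B (pathExt γ)) := by
    unfold transport
    rw [dif_pos hex]
    exact hex.choose_spec
  obtain ⟨h0, hd, -⟩ := ht
  set A := transport B (pathExt γ)
  have hc : ContinuousOn A (Set.Icc (0:ℝ) 1) := fun t ht => (hd t ht).continuousWithinAt
  let X : C(I01, g →L[ℝ] g) := ⟨fun t => A t, continuousOn_iff_continuous_domRestrict.1 hc⟩
  have hX : X = S (adM B γ) := by
    refine S_unique _ _ ?_ ?_
    · intro t
      have h := hd t t.2
      have e1 : (adL B (pathExt γ t)).comp (A t) = (adM B γ * X) t := by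
        rw [ext_apply]; rfl
      rw [e1] at h
      refine h.congr (fun x hx => ext_mem X x hx) (ext_apply X t)
    · exact h0
  rw [← hX]; rfl

variable {B}

lemma ad_bracket (hB : IsLieBracket B) (x y : g) :
    adC B (B x y) = adC B x * adC B y - adC B y * adC B x := by
  ext z
  simp [adC_apply, hB.2 x y z]

lemma skew (hB : IsLieBracket B) (x y : g) : B x y = - B y x := by
  have h := hB.1 (x + y)
  simp [hB.1] at h
  rw [add_comm] at h
  exact eq_neg_of_add_eq_zero_right h

lemma aut_const (hB : IsLieBracket B) (γ : C(I01, g)) (x : g) :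
    S (adM B γ) * ContinuousMap.const I01 (adC B x) =
      adM B (app (S (adM B γ)) (ContinuousMap.const I01 x)) * S (adM B γ) := by
  have hS := Dv_S (adM B γ)
  refine L_unique (adM B γ) _ _ ?_ ?_ ?_
  · have := hS.mul (Dv_const (adC B x))
    simpa [mul_assoc] using this
  · have := ((hS.app (Dv_const x)).ad B).mul hS
    convert this using 1
    ext1 t
    simp only [ContinuousMap.mul_apply, ContinuousMap.add_apply, adM_apply, app_apply,
      ContinuousMap.const_apply, map_zero, add_zero, mul_apply_eq_comp]
    rw [show ∀ z, (adC B (γ t)) z = B (γ t) z from fun _ => rfl, ad_bracket hB]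
    noncomm_ring
  · simp [S_zero]

/-- `A ∘ ad x = ad (A x) ∘ A` -/
lemma aut (hB : IsLieBracket B) (γ δ : C(I01, g)) :
    S (adM B γ) * adM B δ = adM B (app (S (adM B γ)) δ) * S (adM B γ) := by
  ext1 t
  have h : (S (adM B γ) * ContinuousMap.const I01 (adC B (δ t))) t =
      (adM B (app (S (adM B γ)) (ContinuousMap.const I01 (δ t))) * S (adM B γ)) t := by
    rw [aut_const hB γ (δ t)]
  exact h

/-- The product of paths -/
noncomputable def mulP (B : g →ₗ[ℝ] g →ₗ[ℝ] g) (γ δ : C(I01, g)) : C(I01, g) :=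
  γ + app (S (adM B γ)) δ

noncomputable def invP (B : g →ₗ[ℝ] g →ₗ[ℝ] g) (γ : C(I01, g)) : C(I01, g) :=
  - app (Si (adM B γ)) γ

lemma S_mulP (hB : IsLieBracket B) (γ δ : C(I01, g)) :
    S (adM B (mulP B γ δ)) = S (adM B γ) * S (adM B δ) := by
  symm
  refine S_unique _ _ ?_ (by simp [S_zero])
  have := (Dv_S (adM B γ)).mul (Dv_S (adM B δ))
  convert this using 1
  rw [mulP, map_add, add_mul, ← mul_assoc, ← mul_assoc, ← mul_assoc, aut hB]

lemma Si_mulP (hB : IsLieBracket B) (γ δ : C(I01, g)) :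
    Si (adM B (mulP B γ δ)) = Si (adM B δ) * Si (adM B γ) := by
  symm
  apply Si_unique
  rw [S_mulP hB, mul_assoc, ← mul_assoc _ (S (adM B γ)), Si_mul_S, one_mul, Si_mul_S]

lemma app_mul (X Y : C(I01, g →L[ℝ] g)) (f : C(I01, g)) : app (X * Y) f = app X (app Y f) := rfl

lemma app_one (f : C(I01, g)) : app 1 f = f := rfl

lemma app_S_Si (a : C(I01, g →L[ℝ] g)) (f : C(I01, g)) : app (S a) (app (Si a) f) = f := by
  rw [← app_mul, S_mul_Si, app_one]

lemma app_Si_S (a : C(I01, g →L[ℝ] g)) (f : C(I01, g)) : app (Si a) (app (S a) f) = f := by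
  rw [← app_mul, Si_mul_S, app_one]

lemma S_of_zero : S (adM B (0 : C(I01, g))) = 1 := by
  symm
  refine S_unique _ _ ?_ rfl
  simpa using Dv_one

lemma mulP_zero (γ : C(I01, g)) : mulP B γ 0 = γ := by simp [mulP]

lemma zero_mulP (γ : C(I01, g)) : mulP B 0 γ = γ := by rw [mulP, S_of_zero, app_one, zero_add]

lemma mulP_invP (γ : C(I01, g)) : mulP B γ (invP B γ) = 0 := by
  rw [mulP, invP, map_neg, app_S_Si, add_neg_cancel]

lemma S_invP (hB : IsLieBracket B) (γ : C(I01, g)) : S (adM B (invP B γ)) = Si (adM B γ) := by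
  have h : S (adM B γ) * S (adM B (invP B γ)) = 1 := by
    rw [← S_mulP hB, mulP_invP, S_of_zero]
  calc _ = Si (adM B γ) * S (adM B γ) * S (adM B (invP B γ)) := by rw [Si_mul_S, one_mul]
    _ = _ := by rw [mul_assoc, h, mul_one]

lemma invP_mulP (hB : IsLieBracket B) (γ : C(I01, g)) : mulP B (invP B γ) γ = 0 := by
  rw [mulP, S_invP hB, invP, neg_add_cancel]

noncomputable def Z (B : g →ₗ[ℝ] g →ₗ[ℝ] g) (γ γ' : C(I01, g)) : C(I01, g) :=
  V (app (Si (adM B γ)) γ')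

lemma Z_mulP (hB : IsLieBracket B) (γ γ' δ δ' : C(I01, g)) :
    Z B (mulP B γ δ) (γ' + (app (S (adM B γ) * adM B (Z B γ γ')) δ + app (S (adM B γ)) δ')) =
      app (Si (adM B δ)) (Z B γ γ') + Z B δ δ' := by
  refine Dv.unique (Dv_V _) ?_ ?_ 
  · have := ((Dv_Si (adM B δ)).app (Dv_V (app (Si (adM B γ)) γ'))).add
      (Dv_V (app (Si (adM B δ)) δ'))
    refine Eq.mp (congrArg (Dv _) ?_) this
    rw [Si_mulP hB, app_mul, map_add, map_add, map_add, app_mul, app_Si_S, app_Si_S]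
    change PZ.app (-(Si (adM B δ) * adM B δ)) (Z B γ γ') + _ + _ = _
    rw [map_neg, show ∀ X : C(I01, g →L[ℝ] g), (-(app X) : C(I01, g) →L[ℝ] C(I01, g)) (Z B γ γ') = -(app X (Z B γ γ')) from fun _ => rfl, app_mul, map_add]
    have : app (adM B (Z B γ γ')) δ = - app (adM B δ) (Z B γ γ') := by
      ext1 t
      exact skew hB _ _
    rw [this, map_neg]
    abel
  · change _ = Si (adM B δ) 0 (Z B γ γ' 0) + Z B δ δ' 0
    unfold Z
    rw [V_zero, V_zero, V_zero, map_zero, add_zero]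

/-- derivative of the transport -/
lemma W_eq (hB : IsLieBracket B) (γ γ' : C(I01, g)) :
    Ring.inverse (1 - V.comp (Lm (adM B γ))) (V (adM B γ' * S (adM B γ))) =
      S (adM B γ) * adM B (Z B γ γ') := by
  symm
  refine eq_inverse _ (unitL _) _ _ ?_
  have hd := (Dv_S (adM B γ)).mul ((Dv_V (app (Si (adM B γ)) γ')).ad B)
  refine Dv.unique hd ?_ ?_
  · have h2 := (Dv_V (adM B γ' * S (adM B γ))).add
      (Dv_V (Lm (adM B γ) (S (adM B γ) * adM B (Z B γ γ'))))
    refine Eq.mp (congrArg (Dv _) ?_) h2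
    rw [aut hB γ (app (Si (adM B γ)) γ'), app_S_Si, add_comm, Lm_apply, ← mul_assoc]
    rfl
  · change S (adM B γ) 0 * adC B (V _ 0) = V _ 0 + V _ 0
    simp only [V_zero]
    rw [(adC B).map_zero, mul_zero, add_zero]

end lie

section family

variable {R : Type*} [NormedRing R] [NormedAlgebra ℝ R] [CompleteSpace R]

lemma clmD {E F : Type*} [NormedAddCommGroup E] [NormedSpace ℝ E] [NormedAddCommGroup F]
    [NormedSpace ℝ F] (L : E →L[ℝ] F) {f : ℝ → E} {f' : E} {D : Set ℝ} {s : ℝ}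
    (h : HasDerivWithinAt f f' D s) : HasDerivWithinAt (fun s => L (f s)) (L f') D s :=
  L.hasFDerivAt.comp_hasDerivWithinAt s h

lemma gen_bil {M E F : Type*} [NormedAddCommGroup M] [NormedSpace ℝ M] [NormedAddCommGroup E]
    [NormedSpace ℝ E] [NormedAddCommGroup F] [NormedSpace ℝ F] (L : M →L[ℝ] E →L[ℝ] F)
    {f : ℝ → M} {f' : M} {k : ℝ → E} {k' : E} {p : ℝ → F} {p' : F} {D : Set ℝ} {s : ℝ}
    (hp : HasDerivWithinAt p p' D s) (hf : HasDerivWithinAt f f' D s)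
    (hk : HasDerivWithinAt k k' D s) :
    HasDerivWithinAt (fun s => p s + L (f s) (k s)) (p' + (L f' (k s) + L (f s) k')) D s :=
  hp.add ((clmD L hf).clm_apply hk)

lemma gen_inv {M E : Type*} [NormedAddCommGroup M] [NormedSpace ℝ M] [NormedAddCommGroup E]
    [NormedSpace ℝ E] [CompleteSpace E] (K : M →L[ℝ] (E →L[ℝ] E)) {a : ℝ → M} {a' : M} {s : ℝ}
    {D : Set ℝ} (hU : IsUnit (1 - K (a s))) (h : HasDerivWithinAt a a' D s) :
    HasDerivWithinAt (fun s => Ring.inverse (1 - K (a s)))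
      (Ring.inverse (1 - K (a s)) * K a' * Ring.inverse (1 - K (a s))) D s := by
  obtain ⟨u, hu⟩ := hU
  have h1 : HasDerivWithinAt (fun s => K (a s)) (K a') D s := clmD K h
  have h2 : HasDerivWithinAt (fun s => 1 - K (a s)) (-K a') D s := h1.const_sub 1
  have h3 := hasFDerivAt_ringInverse (𝕜 := ℝ) (R := E →L[ℝ] E) u
  rw [hu] at h3
  have h4 := h3.comp_hasDerivWithinAt s h2
  rw [← hu, Ring.inverse_unit]
  refine h4.congr_deriv ?_
  simp

lemma gen_apply {M E : Type*} [NormedAddCommGroup M] [NormedSpace ℝ M] [NormedAddCommGroup E]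
    [NormedSpace ℝ E] [CompleteSpace E] (K : M →L[ℝ] (E →L[ℝ] E)) {a : ℝ → M} {a' : M} {s : ℝ}
    {D : Set ℝ} (hU : IsUnit (1 - K (a s))) (h : HasDerivWithinAt a a' D s) (b : E) :
    HasDerivWithinAt (fun s => Ring.inverse (1 - K (a s)) b)
      (Ring.inverse (1 - K (a s)) (K a' (Ring.inverse (1 - K (a s)) b))) D s := by
  have := (gen_inv K hU h).clm_apply (hasDerivWithinAt_const s D b)
  refine this.congr_deriv ?_
  rw [map_zero, add_zero]
  rfl

lemma gen_cont {M E : Type*} [NormedAddCommGroup M] [NormedSpace ℝ M] [NormedAddCommGroup E]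
    [NormedSpace ℝ E] [CompleteSpace E] (K : M →L[ℝ] (E →L[ℝ] E)) {a a' : ℝ → M}
    {D : Set ℝ} (hU : ∀ s, IsUnit (1 - K (a s)))
    (h : ∀ s ∈ D, HasDerivWithinAt a (a' s) D s) {f : ℝ → E} (hf : ContinuousOn f D) :
    ContinuousOn (fun s => Ring.inverse (1 - K (a s)) (f s)) D := by
  have h1 : ContinuousOn (fun s => Ring.inverse (1 - K (a s))) D :=
    fun s hs => (gen_inv K (hU s) (h s hs)).continuousWithinAt
  exact h1.clm_apply hf

noncomputable def K : C(I01, R) →L[ℝ] (C(I01, R) →L[ℝ] C(I01, R)) :=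
  (ContinuousLinearMap.compL ℝ C(I01, R) C(I01, R) C(I01, R) V).comp Lm

lemma K_unit (a : C(I01, R)) : IsUnit (1 - K a) := unitL a

lemma S_hasDeriv {a : ℝ → C(I01, R)} {a' : C(I01, R)} {s : ℝ} {D : Set ℝ}
    (h : HasDerivWithinAt a a' D s) :
    HasDerivWithinAt (fun s => S (a s))
      (Ring.inverse (1 - K (a s)) (V (a' * S (a s)))) D s := by
  have h0 := gen_apply (M := C(I01, R)) (E := C(I01, R)) (K (R := R)) (K_unit (a s)) h 1
  exact h0

lemma W_cont {a a' : ℝ → C(I01, R)} {D : Set ℝ}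
    (h : ∀ s ∈ D, HasDerivWithinAt a (a' s) D s) {f : ℝ → C(I01, R)} (hf : ContinuousOn f D) :
    ContinuousOn (fun s => Ring.inverse (1 - K (a s)) (f s)) D := by
  have h0 := gen_cont (M := C(I01, R)) (E := C(I01, R)) (K (R := R)) (fun s => K_unit (a s)) h hf
  exact h0

variable {g : Type*} [NormedAddCommGroup g] [NormedSpace ℝ g] [FiniteDimensional ℝ g]
  [CompleteSpace g] {B : g →ₗ[ℝ] g →ₗ[ℝ] g}

/-- admissible families -/
def Fam (B : g →ₗ[ℝ] g →ₗ[ℝ] g) (Γ Γ' : ℝ → C(I01, g)) : Prop :=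
  (∀ s ∈ Set.Icc (0:ℝ) 1, HasDerivWithinAt Γ (Γ' s) (Set.Icc (0:ℝ) 1) s) ∧
    ContinuousOn Γ' (Set.Icc (0:ℝ) 1) ∧
    ∀ s ∈ Set.Icc (0:ℝ) 1, Z B (Γ s) (Γ' s) 1 = 0

lemma Z_one (γ γ' : C(I01, g)) : Z B γ γ' 1 =
    ∫ t in (0:ℝ)..1, Ring.inverse (transport B (pathExt γ) t) (pathExt γ' t) := by
  change (∫ t in (0:ℝ)..1, pathExt (app (Si (adM B γ)) γ') t) = _
  refine intervalIntegral.integral_congr (fun t ht => ?_)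
  rw [Set.uIcc_of_le zero_le_one] at ht
  have h1 := transport_eq B γ ⟨t, ht⟩
  simp only at h1 ⊢
  rw [h1, ring_inverse_S, ext_mem _ t ht, ext_mem _ t ht, app_apply]

lemma inPathZero_iff (γ : C(I01, g)) :
    InPathZero B γ ↔ ∃ Γ Γ' : ℝ → C(I01, g), Fam B Γ Γ' ∧ Γ 0 = 0 ∧ Γ 1 = γ := by
  constructor
  · rintro ⟨Γ, Γ', h1, h2, h3, h4, h5⟩
    exact ⟨Γ, Γ', ⟨h1, h2, fun s hs => by rw [Z_one]; exact h5 s hs⟩, h3, h4⟩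
  · rintro ⟨Γ, Γ', ⟨h1, h2, h5⟩, h3, h4⟩
    exact ⟨Γ, Γ', h1, h2, h3, h4, fun s hs => by rw [← Z_one]; exact h5 s hs⟩

lemma Fam_const (γ : C(I01, g)) : Fam B (fun _ => γ) (fun _ => 0) := by
  refine ⟨fun s _ => hasDerivWithinAt_const _ _ _, continuousOn_const, fun s _ => ?_⟩
  simp [Z]

lemma Fam.rev {Γ Γ' : ℝ → C(I01, g)} (h : Fam B Γ Γ') :
    Fam B (fun s => Γ (1 - s)) (fun s => -Γ' (1 - s)) := by
  obtain ⟨h1, h2, h3⟩ := h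
  have hm : Set.MapsTo (fun s : ℝ => 1 - s) (Set.Icc 0 1) (Set.Icc 0 1) := by
    intro s hs
    constructor <;> simp only [Set.mem_Icc] at hs ⊢ <;> linarith [hs.1, hs.2]
  refine ⟨fun s hs => ?_, ?_, fun s hs => ?_⟩
  · have hd : HasDerivWithinAt (fun s : ℝ => 1 - s) (-1) (Set.Icc 0 1) s :=
      (hasDerivWithinAt_id s _).const_sub 1
    have := HasDerivWithinAt.scomp s (h1 (1 - s) (hm hs)) hd hm
    rw [neg_smul, one_smul] at this
    exact this
  · exact (h2.comp (by fun_prop) hm).neg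
  · have := h3 (1 - s) (hm hs)
    unfold Z at this ⊢
    rw [map_neg, map_neg, ContinuousMap.neg_apply, this, neg_zero]

lemma Fam.mul (hB : IsLieBracket B) {Γ Γ' Δ Δ' : ℝ → C(I01, g)} (hΓ : Fam B Γ Γ')
    (hΔ : Fam B Δ Δ') : ∃ P', Fam B (fun s => mulP B (Γ s) (Δ s)) P' := by
  obtain ⟨h1, h2, h3⟩ := hΓ
  obtain ⟨k1, k2, k3⟩ := hΔ
  have ha : ∀ s ∈ Set.Icc (0:ℝ) 1, HasDerivWithinAt (fun s => adM B (Γ s)) (adM B (Γ' s))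
      (Set.Icc (0:ℝ) 1) s := by
    intro s hs
    have h0 := clmD (E := C(I01, g)) (F := C(I01, g →L[ℝ] g)) (adM B) (h1 s hs)
    exact h0
  let W : ℝ → C(I01, g →L[ℝ] g) := fun s =>
    Ring.inverse (1 - K (adM B (Γ s))) (V (adM B (Γ' s) * S (adM B (Γ s))))
  have hS : ∀ s ∈ Set.Icc (0:ℝ) 1, HasDerivWithinAt (fun s => S (adM B (Γ s))) (W s)
      (Set.Icc (0:ℝ) 1) s := fun s hs => S_hasDeriv (ha s hs)
  have cS : ContinuousOn (fun s => S (adM B (Γ s))) (Set.Icc (0:ℝ) 1) :=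
    fun s hs => (hS s hs).continuousWithinAt
  have cΔ : ContinuousOn Δ (Set.Icc (0:ℝ) 1) := fun s hs => (k1 s hs).continuousWithinAt
  have ca : ContinuousOn (fun s => adM B (Γ' s)) (Set.Icc (0:ℝ) 1) :=
    (adM B).continuous.comp_continuousOn h2
  have cW : ContinuousOn W (Set.Icc (0:ℝ) 1) :=
    W_cont ha (V.continuous.comp_continuousOn (ca.mul cS))
  refine ⟨fun s => Γ' s + (app (W s) (Δ s) + app (S (adM B (Γ s))) (Δ' s)),
    fun s hs => ?_, ?_, fun s hs => ?_⟩
  · have h0 := gen_bil (M := C(I01, g →L[ℝ] g)) (E := C(I01, g)) (F := C(I01, g)) (app (g := g))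
      (h1 s hs) (hS s hs) (k1 s hs)
    exact h0
  · refine h2.add (ContinuousOn.add ?_ ?_)
    · exact (app.continuous.comp_continuousOn cW).clm_apply cΔ
    · exact (app.continuous.comp_continuousOn cS).clm_apply k2
  · have hW : W s = S (adM B (Γ s)) * adM B (Z B (Γ s) (Γ' s)) := W_eq hB _ _
    simp only
    rw [hW, Z_mulP hB, ContinuousMap.add_apply, app_apply, h3 s hs, k3 s hs, map_zero, add_zero]

lemma mul_eq {γ δ m : C(I01, g)} (h : ∀ t, m t = pathMul B γ δ t) : m = mulP B γ δ := by
  ext1 t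
  rw [h t, pathMul, transport_eq]
  rfl

lemma inv_eq {γ m : C(I01, g)} (h : ∀ t, m t = pathInv B γ t) : m = invP B γ := by
  ext1 t
  rw [h t, pathInv, transport_eq, ring_inverse_S]
  rfl

end family

end PZ

/-- `P(g)₀` is a normal subgroup of the path group `P(g) = C([0,1], g)`: it
contains the identity (the constant path `0`), is closed under the
multiplication `(γ·δ)(t) = γ t + A_γ(t)(δ t)` and the inversion
`ι(γ)(t) = -A_γ(t)⁻¹(γ t)`, and is stable under conjugation `δ ↦ γ·(δ·ι(γ))`. -/
theorem pathZero_normal_subgroup {g : Type*}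
    [NormedAddCommGroup g] [NormedSpace ℝ g] [FiniteDimensional ℝ g]
    (B : g →ₗ[ℝ] g →ₗ[ℝ] g) (hB : IsLieBracket B) :
    InPathZero B 0 ∧
    (∀ γ δ : C(Set.Icc (0:ℝ) 1, g), InPathZero B γ → InPathZero B δ →
      ∀ m : C(Set.Icc (0:ℝ) 1, g), (∀ t, m t = pathMul B γ δ t) → InPathZero B m) ∧
    (∀ γ : C(Set.Icc (0:ℝ) 1, g), InPathZero B γ →
      ∀ ι : C(Set.Icc (0:ℝ) 1, g), (∀ t, ι t = pathInv B γ t) → InPathZero B ι) ∧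
    (∀ γ δ : C(Set.Icc (0:ℝ) 1, g), InPathZero B δ →
      ∀ ι m c : C(Set.Icc (0:ℝ) 1, g),
        (∀ t, ι t = pathInv B γ t) → (∀ t, m t = pathMul B δ ι t) →
        (∀ t, c t = pathMul B γ m t) → InPathZero B c) := by
  have : CompleteSpace g := FiniteDimensional.complete ℝ g
  simp only [PZ.inPathZero_iff]
  refine ⟨?_, ?_, ?_, ?_⟩
  · exact ⟨_, _, PZ.Fam_const 0, rfl, rfl⟩
  · rintro γ δ ⟨Γ, Γ', h1, h2, h3⟩ ⟨Δ, Δ', k1, k2, k3⟩ m hm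
    obtain ⟨P', hP⟩ := h1.mul hB k1
    refine ⟨_, P', hP, ?_, ?_⟩
    · rw [h2, k2, PZ.mulP_zero]
    · rw [h3, k3, PZ.mul_eq hm]
  · rintro γ ⟨Γ, Γ', h1, h2, h3⟩ m hm
    obtain ⟨P', hP⟩ := (PZ.Fam_const (PZ.invP B γ)).mul hB h1.rev
    refine ⟨_, P', hP, ?_, ?_⟩
    · simp only [sub_zero]
      rw [h3, PZ.invP_mulP hB]
    · simp only [sub_self]
      rw [h2, PZ.mulP_zero, PZ.inv_eq hm]
  · rintro γ δ ⟨Δ, Δ', k1, k2, k3⟩ ι m c hι hm hc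
    obtain ⟨P', hP⟩ := k1.mul hB (PZ.Fam_const ι)
    obtain ⟨Q', hQ⟩ := (PZ.Fam_const γ).mul hB hP
    refine ⟨_, Q', hQ, ?_, ?_⟩
    · rw [k2, PZ.zero_mulP, PZ.inv_eq hι, PZ.mulP_invP]
    · rw [k3, PZ.mul_eq hc, PZ.mul_eq hm]
end
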